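/- arXiv:2111.02746 — 2 statements merged into one kernel-verified Lean document; each statement's English description precedes it below -/
import Mathlib

section
/- Let n ≥ 2 and let k = min{ j ∈ ℤ⁺ : 3^j ≥ √n }. Suppose m is a positive integer with √n < m < 3^k (note that automatically 3^k < 3√n). Then there exist integers 1 ≤ a < b ≤ n such that b³ + b ≡ a³ + a (mod m²). -/
/-!
The difference of `x ^ 3 + x` at `b` and `a` is `(b - a) * (a ^ 2 + a * b + b ^ 2 + 1)`. Write
`m = M * P`, where `P` is a power of a prime `p ≠ 3` not dividing `M`, and look for `a` and `b` such
that `M ^ 2 ∣ b - a` while `P ^ 2` divides the quadratic factor or is shared by the two factors.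

If `M ≥ 5`, take `b - a = M ^ 2 * c` with `c ≤ p / 2` and lift a root of the quadratic factor to
`P ^ 2`; the root can be chosen below `P ^ 2`, which is small compared to `m ^ 2 / 9`. If `M ≤ 3`
and `3 * a ^ 2 + 1` has a root modulo `p ≠ 2`, it has one modulo `P`, and `b - a = M ^ 2 * P` works.

Otherwise `P ^ 2` divides the quadratic factor. For suitable directions `(x, z)`, the solutions
`(a, b)` contain progressions with difference `P * (x, z)` on equally spaced parallel lines, where
`x * b - z * a` increases by `P ^ 2 * M ^ 2` from one line to the next. If `(x, z)` is neither too
short nor too long, one of them lies in the square `[1, n] ^ 2`. Whether a direction is suitable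
depends only on the class of `x ^ 2 + x * z + z ^ 2` modulo squares; Dirichlet approximation gives a
suitable one which is not too long, and multiplying it by squares of Eisenstein integers of norm
`7`, `13` or `61` makes it long enough. This needs `P` to be large; the remaining `m` are finitely
many, apart from `m = 2 * 3 ^ i`, where `(1, 9 ^ i + 1)` is a solution.
-/

open Polynomial

/-- `Collides m n` says that `x ↦ x ^ 3 + x` fails to be injective modulo `m ^ 2` on `[1, n]`. -/
def Collides (m n : ℕ) : Prop :=
  ∃ a b : ℕ, 1 ≤ a ∧ a < b ∧ b ≤ n ∧ b ^ 3 + b ≡ a ^ 3 + a [MOD m ^ 2]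

lemma Collides.mono {m n n' : ℕ} (h : Collides m n) (hn : n ≤ n') : Collides m n' := by
  obtain ⟨a, b, ha, hab, hb, hmod⟩ := h
  exact ⟨a, b, ha, hab, hb.trans hn, hmod⟩

lemma Collides.of_dvd {m n : ℕ} {a b : ℤ} (ha : a ∈ Set.Icc 1 (n : ℤ)) (hb : b ∈ Set.Icc 1 (n : ℤ))
    (hab : a ≠ b) (h : (m : ℤ) ^ 2 ∣ (b - a) * (a ^ 2 + a * b + b ^ 2 + 1)) : Collides m n := by
  wlog hlt : a < b generalizing a b
  · refine this hb ha hab.symm ?_ (by lia)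
    rwa [← dvd_neg, show -((a - b) * (b ^ 2 + b * a + a ^ 2 + 1)) =
      (b - a) * (a ^ 2 + a * b + b ^ 2 + 1) by ring]
  obtain ⟨ha1, -⟩ := ha
  obtain ⟨-, hbn⟩ := hb
  lift a to ℕ using by lia
  lift b to ℕ using by lia
  refine ⟨a, b, by lia, by lia, by lia, (Nat.modEq_iff_dvd.2 ?_).symm⟩
  push_cast
  convert h using 1
  ring

lemma Collides.of_dvd_sub {m n : ℕ} {d R a : ℤ} (hd : 0 < d) (hR : 0 < R) (hm : (m : ℤ) ^ 2 ∣ d * R)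
    (ha : R ∣ 3 * a ^ 2 + 3 * d * a + d ^ 2 + 1) (hn : R + d ≤ n) : Collides m n := by
  -- the representative of `a` modulo `R` in `[1, R]`
  set r := (a - 1) % R + 1
  have hr0 : 0 ≤ (a - 1) % R := Int.emod_nonneg _ hR.ne'
  have hrR : (a - 1) % R < R := Int.emod_lt_of_pos _ hR
  have hra : r ≡ a [ZMOD R] := by simpa using (Int.mod_modEq (a - 1) R).add_right 1
  have hroot : R ∣ 3 * r ^ 2 + 3 * d * r + d ^ 2 + 1 :=
    ((((((hra.pow 2).mul_left 3).add (hra.mul_left (3 * d))).add_right _).add_right _).dvd_iff).2 ha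
  refine .of_dvd (a := r) (b := r + d) ⟨by lia, by lia⟩ ⟨by lia, by lia⟩ (by lia) (hm.trans ?_)
  convert mul_dvd_mul_left d hroot using 1
  ring

section Hensel

variable {p : ℕ} [Fact p.Prime]

lemma exists_pow_dvd_eval {f : ℤ[X]} {a : ℤ} (ha : (p : ℤ) ∣ f.eval a)
    (ha' : ¬ (p : ℤ) ∣ f.derivative.eval a) (n : ℕ) : ∃ b : ℤ, (p : ℤ) ^ n ∣ f.eval b := by
  have haeval (g : ℤ[X]) (c : ℤ) : g.aeval (c : ℤ_[p]) = (g.eval c : ℤ) := by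
    simpa using aeval_algebraMap_apply_eq_algebraMap_eval (A := ℤ_[p]) c g
  have hderiv : ‖f.derivative.aeval (a : ℤ_[p])‖ = 1 := by
    rw [haeval]
    exact (PadicInt.norm_le_one _).antisymm
      (not_lt.1 fun h ↦ ha' ((PadicInt.norm_int_lt_one_iff_dvd _).1 h))
  have hsmall : ‖f.aeval (a : ℤ_[p])‖ < 1 := by
    rwa [haeval, PadicInt.norm_int_lt_one_iff_dvd]
  obtain ⟨z, hz, -⟩ := hensels_lemma (F := f) (a := (a : ℤ_[p])) (by simpa [hderiv] using hsmall)
  refine ⟨z.appr n, (PadicInt.pow_p_dvd_int_iff n _).1 ?_⟩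
  have hdvd : (p : ℤ_[p]) ^ n ∣ f.aeval z - f.aeval (z.appr n : ℤ_[p]) := by
    simp only [aeval_def, ← eval_map]
    exact (Ideal.mem_span_singleton.1 (PadicInt.appr_spec n z)).trans (sub_dvd_eval_sub _ _ _)
  rwa [hz, zero_sub, dvd_neg, ← Int.cast_natCast (z.appr n), haeval] at hdvd

lemma exists_pow_dvd_quadratic {α β γ a : ℤ} (ha : (p : ℤ) ∣ α * a ^ 2 + β * a + γ)
    (ha' : ¬ (p : ℤ) ∣ 2 * α * a + β) (n : ℕ) : ∃ b, (p : ℤ) ^ n ∣ α * b ^ 2 + β * b + γ := by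
  have := exists_pow_dvd_eval (p := p) (f := C α * X ^ 2 + C β * X + C γ) (a := a)
    (by simpa using ha) (by simpa [mul_comm α, mul_assoc, mul_left_comm] using ha') n
  simpa using this

lemma exists_pow_dvd_mul_sq_add_one {c a : ℤ} (hp2 : p ≠ 2) (ha : (p : ℤ) ∣ c * a ^ 2 + 1) (n : ℕ) :
    ∃ b, (p : ℤ) ^ n ∣ c * b ^ 2 + 1 := by
  have hderiv : ¬ (p : ℤ) ∣ 2 * c * a + 0 := fun h ↦ by
    have h2 : (p : ℤ) ∣ (2 : ℕ) :=
      ((ha.mul_left 2).sub (h.mul_left a)).trans (dvd_of_eq (by push_cast; ring))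
    exact hp2 ((Nat.prime_dvd_prime_iff_eq Fact.out Nat.prime_two).1 (Int.natCast_dvd_natCast.1 h2))
  simpa using exists_pow_dvd_quadratic (β := 0) (by simpa using ha) hderiv n

end Hensel

section Conic

variable {p : ℕ} [Fact p.Prime]

lemma three_ne_zero_of_ne (hp3 : p ≠ 3) : (3 : ZMod p) ≠ 0 := by
  intro h
  have h3 : p ∣ 3 := (ZMod.natCast_eq_zero_iff 3 p).1 (by exact_mod_cast h)
  exact hp3 ((Nat.prime_dvd_prime_iff_eq Fact.out Nat.prime_three).1 h3)

lemma exists_conic_point (hp3 : p ≠ 3) : ∃ a b : ZMod p, a ^ 2 + a * b + b ^ 2 + 1 = 0 := by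
  rcases (Fact.out : p.Prime).eq_two_or_odd with rfl | hodd
  · exact ⟨1, 0, by linear_combination CharTwo.two_eq_zero (R := ZMod 2)⟩
  have h3 := three_ne_zero_of_ne hp3
  have h2 : (2 : ZMod p) ≠ 0 := Ring.two_ne_zero (by rw [ZMod.ringChar_zmod_n]; lia)
  obtain ⟨w, z, hwz⟩ := FiniteField.exists_root_sum_quadratic (R := ZMod p) (f := X ^ 2)
    (g := C 3 * X ^ 2 + C 0 * X + C 4) (degree_X_pow 2) (degree_quadratic h3)
    (by rwa [ZMod.card])
  simp only [eval_pow, eval_X, eval_add, eval_mul, eval_C, zero_mul, add_zero] at hwz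
  -- complete the square: `4 * (a ^ 2 + a * b + b ^ 2 + 1) = (2 * a + b) ^ 2 + 3 * b ^ 2 + 4`
  refine ⟨(w - z) / 2, z, ?_⟩
  field_simp
  linear_combination hwz

lemma exists_conic_point_ne (hp3 : p ≠ 3) :
    ∃ a b : ZMod p, a ^ 2 + a * b + b ^ 2 + 1 = 0 ∧ a ≠ b ∧ a + b ≠ 0 := by
  obtain ⟨a, b, hab⟩ := exists_conic_point hp3
  -- the conic is symmetric in the three coordinates `a`, `b`, `-a - b`
  by_contra! hall
  have h₁ : a = b ∨ a + b = 0 := or_iff_not_imp_left.2 (hall a b hab)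
  have h₂ : b = -a - b ∨ b + (-a - b) = 0 :=
    or_iff_not_imp_left.2 (hall b (-a - b) (by linear_combination hab))
  obtain ⟨rfl, rfl⟩ : a = 0 ∧ b = 0 := by grind [three_ne_zero_of_ne hp3]
  simp at hab

lemma exists_natCast_eq_or_eq_neg (x : ZMod p) : ∃ c : ℕ, 2 * c ≤ p ∧ (x = c ∨ x = -c) := by
  refine ⟨x.valMinAbs.natAbs, by have := ZMod.natAbs_valMinAbs_le x; lia, ?_⟩
  have hx := ZMod.coe_valMinAbs x
  rcases Int.natAbs_eq x.valMinAbs with h | h <;> rw [h] at hx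
  · exact .inl (hx.symm.trans (Int.cast_natCast _))
  · exact .inr (hx.symm.trans (by rw [Int.cast_neg, Int.cast_natCast]))

lemma exists_small_shift (hp3 : p ≠ 3) {t : ℕ} (ht : ¬ p ∣ t) :
    ∃ c : ℕ, 0 < c ∧ 2 * c ≤ p ∧ ∃ a : ℤ,
      (p : ℤ) ∣ 3 * a ^ 2 + 3 * (t * c) * a + ((t * c) ^ 2 + 1) ∧
      ¬ (p : ℤ) ∣ 2 * 3 * a + 3 * (t * c) := by
  obtain ⟨a, b, hab, hne, hsum⟩ := exists_conic_point_ne hp3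
  have ht0 : (t : ZMod p) ≠ 0 := by rwa [Ne, ZMod.natCast_eq_zero_iff]
  obtain ⟨c, hcp, hc⟩ := exists_natCast_eq_or_eq_neg ((b - a) / (t : ZMod p))
  rw [div_eq_iff ht0, div_eq_iff ht0] at hc
  wlog hcab : b - a = c * t generalizing a b
  · refine this b a (by linear_combination hab) hne.symm (by rwa [add_comm]) ?_ ?_ <;> grind
  refine ⟨c, ?_, hcp, a.valMinAbs, ?_, ?_⟩
  · refine Nat.pos_of_ne_zero fun hc0 ↦ hne ?_
    simpa [hc0, sub_eq_zero, eq_comm] using hcab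
  · rw [← ZMod.intCast_zmod_eq_zero_iff_dvd]
    push_cast
    linear_combination hab - (2 * a + b + c * t) * hcab
  · rw [← ZMod.intCast_zmod_eq_zero_iff_dvd]
    push_cast
    rw [show 6 * a + 3 * (t * c) = 3 * (a + b) by linear_combination -3 * hcab]
    exact mul_ne_zero (three_ne_zero_of_ne hp3) hsum

end Conic

section Prime

variable {p : ℕ} [Fact p.Prime]

lemma cofactor_bound {M P c : ℕ} (hp3 : p ≠ 3) (hpM : ¬ p ∣ M) (hM : 5 ≤ M) (hpP : p ∣ P)
    (hP : 3 ≤ P) (hc : 2 * c ≤ p) : 9 * (P ^ 2 + M ^ 2 * c) ≤ (M * P) ^ 2 := by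
  have hpp : p.Prime := Fact.out
  have hcP : 2 * c ≤ P := hc.trans (Nat.le_of_dvd (by lia) hpP)
  have hM5 : 5 ^ 2 ≤ M ^ 2 := Nat.pow_le_pow_left hM 2
  suffices h : 225 * c ≤ 16 * P ^ 2 ∨ 6 ≤ M ∧ 12 * c ≤ P ^ 2 by
    rw [mul_pow]
    zify at h hM5 ⊢
    rcases h with h | ⟨hM6, h⟩
    · nlinarith [mul_nonneg (sub_nonneg.2 hM5) (show (0 : ℤ) ≤ P ^ 2 - 9 * c by lia)]
    · have hM36 : (6 : ℤ) ^ 2 ≤ M ^ 2 := by gcongr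
      nlinarith [mul_nonneg (sub_nonneg.2 hM36) (show (0 : ℤ) ≤ P ^ 2 - 9 * c by lia)]
  rcases le_or_gt 8 P with h8 | h8
  · exact .inl (by nlinarith)
  have hp7 : p ≤ 7 := (Nat.le_of_dvd (by lia) hpP).trans (by lia)
  interval_cases p <;> norm_num at hpp <;> interval_cases P <;> grind

lemma Collides.of_five_le {M n e : ℕ} (hp3 : p ≠ 3) (hpM : ¬ p ∣ M) (hM : 5 ≤ M)
    (hP : 3 ≤ p ^ (e + 1)) (hn : (M * p ^ (e + 1)) ^ 2 + 9 ≤ 9 * n) :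
    Collides (M * p ^ (e + 1)) n := by
  obtain ⟨c, hc0, hcp, a, ha, ha'⟩ :=
    exists_small_shift hp3 (mt (Nat.Prime.dvd_of_dvd_pow (n := 2) Fact.out) hpM)
  obtain ⟨b, hb⟩ := exists_pow_dvd_quadratic ha ha' (2 * (e + 1))
  have hbound := cofactor_bound hp3 hpM hM (dvd_pow_self p e.succ_ne_zero) hP hcp
  refine .of_dvd_sub (d := M ^ 2 * c) (R := (p ^ (e + 1)) ^ 2) (a := b) (by positivity)
    (pow_pos (by lia) 2) ⟨c, ?_⟩ ?_ ?_
  · push_cast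
    ring
  · rw [← pow_mul, mul_comm (e + 1)]
    simpa [add_assoc] using hb
  · norm_cast
    lia

lemma Collides.of_dvd_three_mul_sq_add_one {M P n : ℕ} {a : ℤ} (hM : 0 < M) (hP : 18 ≤ P)
    (ha : (P : ℤ) ∣ 3 * a ^ 2 + 1) (hn : (M * P) ^ 2 + 9 ≤ 9 * n) : Collides (M * P) n := by
  refine .of_dvd_sub (d := M ^ 2 * P) (R := P) (a := a) (by positivity) (by lia) ⟨1, ?_⟩ ?_ ?_
  · push_cast
    ring
  · obtain ⟨r, hr⟩ := ha
    exact ⟨r + M ^ 2 * (3 * a + M ^ 2 * P), by linear_combination hr⟩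
  · norm_cast
    nlinarith [Nat.mul_le_mul_left (M ^ 2 * P) hP, Nat.mul_le_mul_right P (Nat.pow_pos (n := 2) hM)]

end Prime

/-- The Eisenstein norm form `x ^ 2 + x * z + z ^ 2` on the lattice of all `(x, z)` with
`x ≡ z [ZMOD k]`, parametrised by `z = x + k * y`. -/
def latticeNorm (k x y : ℤ) : ℤ :=
  x ^ 2 + x * (x + k * y) + (x + k * y) ^ 2

section Lattice

lemma exists_two_mul_abs_add_mul_le {S : ℤ} (hS : S ≠ 0) (E : ℤ) :
    ∃ q : ℤ, 2 * |E + S * q| ≤ |S| := by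
  obtain ⟨r, hr⟩ : ∃ r : ℤ, |(E / S : ℚ) - r| ≤ 1 / 2 := ⟨_, abs_sub_round _⟩
  refine ⟨-r, ?_⟩
  have hSQ : (S : ℚ) ≠ 0 := by exact_mod_cast hS
  have hE : (E + S * -r : ℚ) = S * (E / S - r) := by
    field_simp
    ring
  qify
  rw [hE, abs_mul]
  linarith [mul_le_mul_of_nonneg_left hr (abs_nonneg (S : ℚ))]

variable {P k x y s : ℤ}

lemma exists_dvd_and_dvd_latticeNorm (hkP : IsCoprime k P)
    (hs : P ∣ 3 * s ^ 2 * latticeNorm k x y + 1) :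
    ∃ t, k ∣ t ∧ P ∣ 3 * t ^ 2 * latticeNorm k x y + 1 := by
  obtain ⟨α, β, hαβ⟩ := hkP
  obtain ⟨r, hr⟩ := hs
  have ht : k * (α * s) = s - P * (β * s) := by linear_combination s * hαβ
  refine ⟨k * (α * s), dvd_mul_right _ _,
    r + 3 * (-2 * s * (β * s) + P * (β * s) ^ 2) * latticeNorm k x y, ?_⟩
  rw [ht]
  linear_combination hr

lemma exists_solution_det_near (hP : 0 < P) (hk : 0 < k) (hxy : IsCoprime x y)
    (hkP : IsCoprime k P) (hs : P ∣ 3 * s ^ 2 * latticeNorm k x y + 1) (T : ℤ) :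
    ∃ a b : ℤ, k ∣ b - a ∧ P ^ 2 ∣ a ^ 2 + a * b + b ^ 2 + 1 ∧
      P ∣ a * (2 * x + (x + k * y)) + b * (x + 2 * (x + k * y)) ∧
      |2 * (x * b - (x + k * y) * a) + T| ≤ P ^ 2 * k := by
  obtain ⟨t, ⟨t', rfl⟩, r, hr⟩ := exists_dvd_and_dvd_latticeNorm hkP hs
  set z := x + k * y with hz
  -- `(a₀, b₀)` is a root modulo `P`; the roots modulo `P ^ 2` above it are the points
  -- `(a₀, b₀) + P * w` with `det ((x, z), w) ≡ k * δ` modulo `P`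
  set a₀ := -(k * t') * (x + 2 * z) with ha₀
  set b₀ := k * t' * (2 * x + z) with hb₀
  have hbase : a₀ ^ 2 + a₀ * b₀ + b₀ ^ 2 + 1 = P * r := by
    rw [← hr, ha₀, hb₀, latticeNorm]
    ring
  obtain ⟨δ, ρ, hδ⟩ : ∃ δ ρ : ℤ, r + 3 * (k * t') * k * δ = P * ρ := by
    have hcop : IsCoprime (3 * (k * t') * k) P := by
      refine IsCoprime.mul_left ⟨-(k * t' * latticeNorm k x y), r, ?_⟩ hkP
      linear_combination -hr
    obtain ⟨α, β, hαβ⟩ := hcop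
    exact ⟨-r * α, r * β, by linear_combination (-r) * hαβ⟩
  obtain ⟨q, hq⟩ := exists_two_mul_abs_add_mul_le (S := 2 * P ^ 2 * k) (by positivity)
    (2 * (x * b₀ - z * a₀) + 2 * P * k * δ + T)
  rw [abs_of_pos (show 0 < 2 * P ^ 2 * k by positivity)] at hq
  obtain ⟨β, α, hβα⟩ := hxy
  set c := -((δ + P * q) * α) with hc
  set d := (δ + P * q) * (β * k - α) with hd
  have hdet : x * d - z * c = k * (δ + P * q) := by
    rw [hd, hc, hz]
    linear_combination k * (δ + P * q) * hβα
  refine ⟨a₀ + P * c, b₀ + P * d, ⟨3 * t' * (x + z) + P * (δ + P * q) * β, ?_⟩,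
    ⟨ρ + 3 * (k * t') * k * q + (c ^ 2 + c * d + d ^ 2), ?_⟩,
    ⟨c * (2 * x + z) + d * (x + 2 * z), ?_⟩, ?_⟩
  · rw [ha₀, hb₀, hc, hd]
    ring
  · linear_combination hbase + P * hδ + 3 * P * (k * t') * hdet
  · rw [ha₀, hb₀]
    ring
  · rw [show 2 * (x * (b₀ + P * d) - z * (a₀ + P * c)) + T =
      2 * (x * b₀ - z * a₀) + 2 * P * k * δ + T + 2 * P ^ 2 * k * q by
        linear_combination 2 * P * hdet]
    linarith

lemma abs_le_of_abs_det_le {n z A B : ℤ} (hP : 0 < P) (hx : 10 ≤ |x|) (hkP : 900 ≤ k * P)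
    (hxP : 10 * |x| ≤ k * P) (hn : k * P ^ 2 + 9 ≤ 9 * n) (hzx : |z| ≤ |x|) (hA : |A| ≤ P * |x|)
    (hdet : |x * B - z * A| ≤ P ^ 2 * k) : |A| ≤ n - 1 ∧ |B| ≤ n - 1 := by
  refine ⟨by nlinarith [mul_le_mul_of_nonneg_left hxP hP.le, mul_nonneg hP.le (abs_nonneg x)], ?_⟩
  have htri : |x| * |B| ≤ P ^ 2 * k + P * |x| ^ 2 := by
    calc |x| * |B| = |(x * B - z * A) + z * A| := by rw [← abs_mul, sub_add_cancel]
      _ ≤ |x * B - z * A| + |z| * |A| := (abs_add_le _ _).trans_eq (by rw [abs_mul z])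
      _ ≤ P ^ 2 * k + |x| * (P * |x|) := by gcongr
      _ = P ^ 2 * k + P * |x| ^ 2 := by ring
  have hkey : 9 * (k * P) + 9 * |x| ^ 2 ≤ |x| * (k * P) := by
    nlinarith [mul_nonneg (sub_nonneg.2 hx) (sub_nonneg.2 hxP)]
  refine le_of_mul_le_mul_left ?_ (show 0 < |x| by lia)
  nlinarith [mul_le_mul_of_nonneg_left hkey hP.le, mul_le_mul_of_nonneg_left hn (abs_nonneg x)]

lemma exists_small_solution {n : ℤ} (hP : 0 < P) (hk : 0 < k) (hxy : IsCoprime x y)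
    (hkP : IsCoprime k P) (hs : P ∣ 3 * s ^ 2 * latticeNorm k x y + 1) (hzx : |x + k * y| ≤ |x|)
    (hx : 10 ≤ |x|) (hkP' : 900 ≤ k * P) (hxP : 10 * |x| ≤ k * P) (hn : k * P ^ 2 + 9 ≤ 9 * n) :
    ∃ a ∈ Set.Icc 1 n, ∃ b ∈ Set.Icc 1 n, k ∣ b - a ∧ P ^ 2 ∣ a ^ 2 + a * b + b ^ 2 + 1 := by
  set z := x + k * y with hz
  obtain ⟨a, b, ⟨c, hc⟩, ⟨r, hr⟩, ⟨w, hw⟩, hdet⟩ :=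
    exists_solution_det_near hP hk hxy hkP hs ((n + 1) * (z - x))
  rw [← hz] at hw hdet
  have hx0 : x ≠ 0 := by
    rintro rfl
    simp at hx
  -- translating by multiples of `P * (x, z)` preserves the determinant
  obtain ⟨i, hi⟩ := exists_two_mul_abs_add_mul_le (S := 2 * P * x) (by positivity) (2 * a - (n + 1))
  rw [abs_mul, abs_of_pos (show 0 < 2 * P by positivity)] at hi
  obtain ⟨hA, hB⟩ := abs_le_of_abs_det_le (A := 2 * (a + P * i * x) - (n + 1))
    (B := 2 * (b + P * i * z) - (n + 1)) hP hx hkP' hxP hn hzx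
    (by rw [show 2 * (a + P * i * x) - (n + 1) = 2 * a - (n + 1) + 2 * P * x * i by ring]; linarith)
    (by convert hdet using 2; ring)
  rw [abs_le] at hA hB
  refine ⟨a + P * i * x, ⟨by linarith, by linarith⟩, b + P * i * z, ⟨by linarith, by linarith⟩,
    ⟨c + P * i * y, ?_⟩, ⟨r + i * w + i ^ 2 * latticeNorm k x y, ?_⟩⟩
  · linear_combination hc + P * i * hz
  · rw [latticeNorm, ← hz]
    linear_combination hr + P * i * hw

end Lattice

section Rotation

variable {k l r x y : ℤ}

lemma four_mul_latticeNorm (k x y : ℤ) :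
    4 * latticeNorm k x y = (2 * x + (x + k * y)) ^ 2 + 3 * (x + k * y) ^ 2 := by
  rw [latticeNorm]
  ring

lemma latticeNorm_nonneg (k x y : ℤ) : 0 ≤ latticeNorm k x y := by
  nlinarith [four_mul_latticeNorm k x y]

/-- Primitive vectors `(x, y)` for which some multiple of `(-(x + 2 * z), 2 * x + z)`, where
`z = x + k * y`, lies on the conic `a ^ 2 + a * b + b ^ 2 + 1 = 0` modulo `p`: the value of the
form at `s` times that vector is `3 * s ^ 2 * latticeNorm k x y`. -/
def IsAdmissible (p : ℕ) (k x y : ℤ) : Prop :=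
  IsCoprime x y ∧ ∃ s : ZMod p, 3 * s ^ 2 * latticeNorm k x y + 1 = 0

lemma isCoprime_or_dvd_and_dvd (hl : Prime l) (hxy : IsCoprime x y) {x' y' α β γ δ : ℤ}
    (hx : l * x = α * x' + β * y') (hy : l * y = γ * x' + δ * y') :
    IsCoprime x' y' ∨ l ∣ x' ∧ l ∣ y' := by
  obtain ⟨u, v, huv⟩ := hxy
  have hspan : (u * β + v * δ) * y' + x' * (u * α + v * γ) = l := by
    linear_combination l * huv - u * hx - v * hy
  by_cases hx' : l ∣ x'
  · refine or_iff_not_imp_right.2 fun h ↦ ?_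
    have hcop : IsCoprime l y' := (hl.coprime_iff_not_dvd).2 fun hy' ↦ h ⟨hx', hy'⟩
    rw [← hspan, add_comm] at hcop
    exact (hcop.of_add_mul_right_left).of_mul_left_left
  · have hcop : IsCoprime l x' := (hl.coprime_iff_not_dvd).2 hx'
    rw [← hspan] at hcop
    exact .inl (hcop.of_add_mul_left_left.of_mul_left_right).symm

lemma exists_isCoprime_latticeNorm_eq_mul (hl : Prime l) (hr : r ^ 2 - r * k + k ^ 2 = l)
    (hrk : ¬ l ∣ 2 * r - k) (hxy : IsCoprime x y) :
    ∃ x' y', IsCoprime x' y' ∧ latticeNorm k x' y' = l * latticeNorm k x y := by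
  -- multiplication by an element of norm `l`, given by `r`, or by its conjugate, given by `k - r`
  have hrot (q : ℤ) (hq : q ^ 2 - q * k + k ^ 2 = l) :
      (∃ x' y', IsCoprime x' y' ∧ latticeNorm k x' y' = l * latticeNorm k x y) ∨
        l ∣ (q + k) * x + k ^ 2 * y ∧ l ∣ -3 * x + (q - 2 * k) * y := by
    refine (isCoprime_or_dvd_and_dvd hl hxy (α := q - 2 * k) (β := -k ^ 2) (γ := 3) (δ := q + k)
      (by rw [← hq]; ring) (by rw [← hq]; ring)).imp_left fun h ↦ ⟨_, _, h, ?_⟩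
    rw [← hq, latticeNorm, latticeNorm]
    ring
  by_contra hne
  obtain ⟨⟨c₁, hc₁⟩, ⟨d₁, hd₁⟩⟩ := (hrot r hr).resolve_left hne
  obtain ⟨⟨c₂, hc₂⟩, ⟨d₂, hd₂⟩⟩ := (hrot (k - r) (by rw [← hr]; ring)).resolve_left hne
  obtain ⟨u, v, huv⟩ := hxy
  refine hrk ⟨u * (c₁ - c₂) + v * (d₁ - d₂), ?_⟩
  linear_combination -(2 * r - k) * huv + u * (hc₁ - hc₂) + v * (hd₁ - hd₂)

variable {p : ℕ} [Fact p.Prime]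

lemma IsAdmissible.exists_mul_sq (hl : Prime l) (hr : r ^ 2 - r * k + k ^ 2 = l)
    (hrk : ¬ l ∣ 2 * r - k) (hpl : ¬ (p : ℤ) ∣ l) (h : IsAdmissible p k x y) :
    ∃ x' y', IsAdmissible p k x' y' ∧ latticeNorm k x' y' = l ^ 2 * latticeNorm k x y := by
  obtain ⟨hxy, s, hs⟩ := h
  obtain ⟨x₁, y₁, hxy₁, hN₁⟩ := exists_isCoprime_latticeNorm_eq_mul hl hr hrk hxy
  obtain ⟨x₂, y₂, hxy₂, hN₂⟩ := exists_isCoprime_latticeNorm_eq_mul hl hr hrk hxy₁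
  have hN : latticeNorm k x₂ y₂ = l ^ 2 * latticeNorm k x y := by
    rw [hN₂, hN₁]
    ring
  rw [← ZMod.intCast_zmod_eq_zero_iff_dvd] at hpl
  refine ⟨x₂, y₂, ⟨hxy₂, s / l, ?_⟩, hN⟩
  rw [hN]
  push_cast
  field_simp
  linear_combination hs

lemma IsAdmissible.latticeNorm_pos (h : IsAdmissible p k x y) : 0 < latticeNorm k x y := by
  obtain ⟨-, s, hs⟩ := h
  refine (latticeNorm_nonneg k x y).lt_of_ne fun h0 ↦ ?_
  simp [← h0] at hs

lemma IsAdmissible.exists_latticeNorm_mem_Icc {B C : ℤ} (hl : Prime l)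
    (hr : r ^ 2 - r * k + k ^ 2 = l) (hrk : ¬ l ∣ 2 * r - k) (hpl : ¬ (p : ℤ) ∣ l)
    (hB : l ^ 2 * C ≤ B) (h : IsAdmissible p k x y) (hN : latticeNorm k x y ≤ B) :
    ∃ x' y', IsAdmissible p k x' y' ∧ latticeNorm k x' y' ∈ Set.Icc C B := by
  obtain ⟨N, ⟨⟨x₁, y₁, h₁, rfl⟩, hN₁⟩, hmax⟩ := Int.exists_greatest_of_bdd
    (P := fun N ↦ (∃ x y, IsAdmissible p k x y ∧ latticeNorm k x y = N) ∧ N ≤ B)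
    ⟨B, fun _ h ↦ h.2⟩ ⟨_, ⟨x, y, h, rfl⟩, hN⟩
  refine ⟨x₁, y₁, h₁, not_lt.1 fun hC ↦ ?_, hN₁⟩
  obtain ⟨x₂, y₂, h₂, hN₂⟩ := h₁.exists_mul_sq hl hr hrk hpl
  have hl1 : 1 < l ^ 2 := by
    rw [one_lt_sq_iff_one_lt_abs, Int.abs_eq_natAbs]
    exact_mod_cast (Int.prime_iff_natAbs_prime.1 hl).one_lt
  have hle := hmax _ ⟨⟨x₂, y₂, h₂, rfl⟩, hN₂ ▸ by nlinarith⟩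
  nlinarith [h₁.latticeNorm_pos]

end Rotation

section Start

lemma exists_rat_den_mul_sub_mul_num_le (t : ℤ) {N n : ℕ} (hN : 0 < N) (hn : 0 < n) :
    ∃ q : ℚ, q.den ≤ n ∧ (n + 1) * |q.den * t - N * q.num| ≤ N := by
  obtain ⟨q, hq, hqn⟩ := Real.exists_rat_abs_sub_le_and_den_le (t / N : ℝ) hn
  have hden : (q.den : ℝ) ≠ 0 := by exact_mod_cast q.den_ne_zero
  have hcross : (q.den * t - N * q.num : ℝ) = N * q.den * (t / N - q) := by
    rw [Rat.cast_def q]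
    field_simp
  refine ⟨q, hqn, ?_⟩
  rify
  rw [hcross, abs_mul, abs_of_nonneg (by positivity)]
  calc (n + 1) * (N * q.den * |(t / N - q : ℝ)|)
      ≤ (n + 1) * (N * q.den * (1 / ((n + 1) * q.den))) := by gcongr
    _ = N := by field_simp

variable {p : ℕ} [Fact p.Prime]

lemma exists_isCoprime_sq_le_eq_mul (t : ZMod p) :
    ∃ x y : ℤ, IsCoprime x y ∧ (x : ZMod p) ≠ 0 ∧ x ^ 2 ≤ p ∧ y ^ 2 ≤ p ∧ (y : ZMod p) = t * x := by
  have hp : p.Prime := Fact.out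
  obtain ⟨q, hqn, hq⟩ :=
    exists_rat_den_mul_sub_mul_num_le t.val hp.pos (Nat.sqrt_pos.2 hp.pos)
  have hdenp : IsCoprime (q.den : ℤ) p := Nat.isCoprime_iff_coprime.2
    (Nat.coprime_of_lt_prime q.den_ne_zero (hqn.trans_lt (Nat.sqrt_lt_self hp.one_lt)) hp).symm
  have hdenum : IsCoprime (q.den : ℤ) q.num := by
    rw [Int.isCoprime_iff_nat_coprime]
    exact q.reduced.symm
  have hsqrt : (p.sqrt : ℤ) ^ 2 ≤ p := by exact_mod_cast p.sqrt_le'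
  have hsqrt' : (p : ℤ) < (p.sqrt + 1) * (p.sqrt + 1) := by exact_mod_cast p.lt_succ_sqrt
  have hy : |q.den * t.val - p * q.num| ≤ (p.sqrt : ℤ) := by nlinarith
  refine ⟨q.den, q.den * t.val - p * q.num, ?_, ?_, ?_, ?_, ?_⟩
  · rw [sub_eq_neg_add]
    exact (hdenp.mul_right hdenum).neg_right.add_mul_left_right _
  · rw [Ne, ZMod.intCast_zmod_eq_zero_iff_dvd, ← (Nat.prime_iff_prime_int.1 hp).coprime_iff_not_dvd]
    exact hdenp.symm
  · exact_mod_cast (Nat.pow_le_pow_left hqn 2).trans p.sqrt_le'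
  · exact (sq_le_sq.2 (hy.trans (le_abs_self _))).trans hsqrt
  · simp [mul_comm]

lemma exists_isAdmissible_latticeNorm_le (hp3 : p ≠ 3) (hinert : ∀ a : ZMod p, 3 * a ^ 2 + 1 ≠ 0)
    {k : ℤ} (hk : 0 < k) (hpk : ¬ (p : ℤ) ∣ k) :
    ∃ x y, IsAdmissible p k x y ∧ latticeNorm k x y ≤ 7 * k ^ 2 * p := by
  obtain ⟨a, b, hab⟩ := exists_conic_point hp3
  have h3 := three_ne_zero_of_ne hp3
  have hab' : a + 2 * b ≠ 0 := fun h ↦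
    hinert b (by linear_combination hab - (a - b) * h)
  rw [← ZMod.intCast_zmod_eq_zero_iff_dvd] at hpk
  -- the direction `(x, x + k * y)` is proportional to `(a + 2 * b, -(2 * a + b))` modulo `p`
  obtain ⟨x, y, hxy, hx0, hx, hy, hyx⟩ :=
    exists_isCoprime_sq_le_eq_mul (-3 * (a + b) / ((k : ZMod p) * (a + 2 * b)))
  refine ⟨x, y, ⟨hxy, (a + 2 * b) / (3 * x), ?_⟩, ?_⟩
  · rw [latticeNorm]
    push_cast
    rw [hyx]
    field_simp
    linear_combination 3 * hab
  · rw [latticeNorm]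
    have hxy : x * y ≤ p := by nlinarith [sq_nonneg (x - y)]
    calc x ^ 2 + x * (x + k * y) + (x + k * y) ^ 2
        = 3 * x ^ 2 + 3 * k * (x * y) + k ^ 2 * y ^ 2 := by ring
      _ ≤ 3 * p + 3 * k * p + k ^ 2 * p := by gcongr
      _ = (3 + 3 * k + k ^ 2) * p := by ring
      _ ≤ 7 * k ^ 2 * p := by gcongr; nlinarith

end Start

section Inert

lemma Collides.of_isCoprime {M P n : ℕ} {x y s : ℤ} (hMP : M.Coprime P) (hMP' : 900 ≤ M ^ 2 * P)
    (hroot : ∀ a : ℤ, ¬ (P : ℤ) ∣ 3 * a ^ 2 + 1) (hxy : IsCoprime x y)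
    (hs : (P : ℤ) ∣ 3 * s ^ 2 * latticeNorm (M ^ 2) x y + 1)
    (hN : 300 ≤ latticeNorm (M ^ 2) x y)
    (hN' : 400 * latticeNorm (M ^ 2) x y ≤ 3 * (M ^ 2 * P) ^ 2)
    (hn : (M * P) ^ 2 + 9 ≤ 9 * n) : Collides (M * P) n := by
  wlog hzx : |x + M ^ 2 * y| ≤ |x| generalizing x y
  · have hsymm : latticeNorm (M ^ 2) (x + M ^ 2 * y) (-y) = latticeNorm (M ^ 2) x y := by
      rw [latticeNorm, latticeNorm]
      ring
    have hx : x + M ^ 2 * y + M ^ 2 * -y = x := by ring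
    exact this (IsCoprime.add_mul_right_left hxy _).neg_right (by rwa [hsymm]) (by rwa [hsymm])
      (by rwa [hsymm]) (by rw [hx]; exact (not_le.1 hzx).le)
  have hM : M ≠ 0 := by rintro rfl; simp at hMP'
  have hP : P ≠ 0 := by rintro rfl; simp at hMP'
  have hk : (0 : ℤ) < (M : ℤ) ^ 2 := by positivity
  have hx : 10 ≤ |x| := by
    have hzx' := sq_le_sq.2 hzx
    have hxx : 10 ^ 2 ≤ x ^ 2 := by
      rw [latticeNorm] at hN
      nlinarith [sq_nonneg (x - (x + M ^ 2 * y))]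
    exact (le_abs_self _).trans (sq_le_sq.1 hxx)
  have hxP : 10 * |x| ≤ M ^ 2 * P := by
    refine abs_le_of_sq_le_sq' ?_ (by positivity) |>.2
    rw [mul_pow, sq_abs]
    have : 3 * x ^ 2 ≤ 4 * latticeNorm (M ^ 2) x y := by
      rw [latticeNorm]
      linarith [sq_nonneg (x + 2 * (x + M ^ 2 * y))]
    linarith
  obtain ⟨a, ha, b, hb, hkab, hPab⟩ := exists_small_solution (n := n) (by positivity) hk hxy
    (Nat.isCoprime_iff_coprime.2 hMP).pow_left hs hzx hx (by exact_mod_cast hMP') hxP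
    (by rw [← mul_pow]; exact_mod_cast hn)
  refine .of_dvd ha hb ?_ ?_
  · rintro rfl
    exact hroot a <| ((dvd_pow_self _ two_ne_zero).trans hPab).trans (dvd_of_eq (by ring))
  · push_cast
    rw [mul_pow]
    exact mul_dvd_mul hkab hPab

variable {p : ℕ} [Fact p.Prime]

lemma Collides.of_isAdmissible {M e n : ℕ} {x y : ℤ} (hp2 : p ≠ 2)
    (hinert : ∀ a : ZMod p, 3 * a ^ 2 + 1 ≠ 0) (hpM : ¬ p ∣ M)
    (hMP : 900 ≤ M ^ 2 * p ^ (e + 1)) (h : IsAdmissible p (M ^ 2) x y)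
    (hN : 300 ≤ latticeNorm (M ^ 2) x y)
    (hN' : 400 * latticeNorm (M ^ 2) x y ≤ 3 * (M ^ 2 * p ^ (e + 1)) ^ 2)
    (hn : (M * p ^ (e + 1)) ^ 2 + 9 ≤ 9 * n) : Collides (M * p ^ (e + 1)) n := by
  have hp : p.Prime := Fact.out
  obtain ⟨hxy, s, hs⟩ := h
  obtain ⟨s, rfl⟩ := ZMod.intCast_surjective s
  obtain ⟨t, ht⟩ := exists_pow_dvd_mul_sq_add_one (c := 3 * latticeNorm (M ^ 2) x y) (a := s) hp2
    (by
      rw [← ZMod.intCast_zmod_eq_zero_iff_dvd]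
      push_cast
      linear_combination hs) (e + 1)
  refine .of_isCoprime (((hp.coprime_iff_not_dvd.2 hpM).pow_left _).symm) hMP (fun a ha ↦ ?_) hxy
    (s := t) ?_ hN (by exact_mod_cast hN') hn
  · push_cast at ha
    exact hinert a (by
      exact_mod_cast (ZMod.intCast_zmod_eq_zero_iff_dvd _ _).2
        ((dvd_pow_self _ e.succ_ne_zero).trans ha))
  · push_cast
    exact ht.trans (dvd_of_eq (by ring))

lemma Collides.of_inert_of_norm_eq {M e n : ℕ} {l r : ℤ} (hp2 : p ≠ 2) (hp3 : p ≠ 3)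
    (hinert : ∀ a : ZMod p, 3 * a ^ 2 + 1 ≠ 0) (hpM : ¬ p ∣ M) (hP : 1400 ≤ p ^ (e + 1))
    (hl : Prime l) (hr : r ^ 2 - r * M ^ 2 + (M ^ 2) ^ 2 = l) (hrM : ¬ l ∣ 2 * r - M ^ 2)
    (hpl : ¬ (p : ℤ) ∣ l) (hlM : l ^ 2 ≤ 49 * M ^ 4)
    (hn : (M * p ^ (e + 1)) ^ 2 + 9 ≤ 9 * n) : Collides (M * p ^ (e + 1)) n := by
  have hM : 0 < M := Nat.pos_of_ne_zero (by rintro rfl; simp at hpM)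
  have hPp : (p : ℤ) ≤ p ^ (e + 1) := by exact_mod_cast Nat.le_self_pow e.succ_ne_zero p
  have hP' : (1400 : ℤ) ≤ p ^ (e + 1) := by exact_mod_cast hP
  obtain ⟨x, y, hxy, hN⟩ := exists_isAdmissible_latticeNorm_le hp3 hinert (k := M ^ 2)
    (by positivity) (by exact_mod_cast mt (Nat.Prime.dvd_of_dvd_pow (n := 2) Fact.out) hpM)
  obtain ⟨x', y', hxy', hC, hB⟩ := hxy.exists_latticeNorm_mem_Icc (C := 300)
    (B := 3 * (M ^ 2 * p ^ (e + 1)) ^ 2 / 400) hl hr hrM hpl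
    (by
      rw [Int.le_ediv_iff_mul_le (by norm_num), mul_pow]
      have hPsq : (1400 : ℤ) ^ 2 ≤ (p ^ (e + 1)) ^ 2 := by gcongr
      nlinarith [mul_le_mul_of_nonneg_left hPsq (by positivity : (0 : ℤ) ≤ M ^ 4)])
    (by
      rw [Int.le_ediv_iff_mul_le (by norm_num)]
      nlinarith [mul_le_mul hPp hP' (by norm_num) (by positivity),
        show (0 : ℤ) ≤ (M ^ 2) ^ 2 by positivity])
  refine .of_isAdmissible hp2 hinert hpM ?_ hxy' hC ?_ hn
  · nlinarith [Nat.pow_pos (n := 2) hM]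
  · exact (mul_le_mul_of_nonneg_left hB (by norm_num)).trans (Int.mul_ediv_self_le (by norm_num))

lemma Collides.of_inert {M e n : ℕ} (hp2 : p ≠ 2) (hp3 : p ≠ 3)
    (hinert : ∀ a : ZMod p, 3 * a ^ 2 + 1 ≠ 0) (hpM : ¬ p ∣ M) (hM : M ≤ 3)
    (hP : 1400 ≤ p ^ (e + 1)) (hn : (M * p ^ (e + 1)) ^ 2 + 9 ≤ 9 * n) :
    Collides (M * p ^ (e + 1)) n := by
  have hpl {l a c : ℤ} (h : 3 * a ^ 2 + 1 = l * c) : ¬ (p : ℤ) ∣ l := fun hl ↦ by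
    refine hinert a ?_
    exact_mod_cast (ZMod.intCast_zmod_eq_zero_iff_dvd _ p).2 (h ▸ hl.mul_right c)
  interval_cases M
  · simp at hpM
  · exact .of_inert_of_norm_eq (l := 7) (r := 3) hp2 hp3 hinert hpM hP (by norm_num) (by norm_num)
      (by norm_num) (hpl (a := 3) (c := 4) (by norm_num)) (by norm_num) hn
  · exact .of_inert_of_norm_eq (l := 13) (r := 3) hp2 hp3 hinert hpM hP (by norm_num) (by norm_num)
      (by norm_num) (hpl (a := 2) (c := 1) (by norm_num)) (by norm_num) hn
  · exact .of_inert_of_norm_eq (l := 61) (r := 4) hp2 hp3 hinert hpM hP (by norm_num) (by norm_num)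
      (by norm_num) (hpl (a := 9) (c := 4) (by norm_num)) (by norm_num) hn

end Inert

lemma exists_two_pow_dvd_mul_sq_add_one (n : ℕ) : ∃ s : ℤ, 2 ^ n ∣ 1143 * s ^ 2 + 1 := by
  -- `1143 * (2 * t + 1) ^ 2 + 1 = 4 * (1143 * t ^ 2 + 1143 * t + 286)`
  obtain ⟨t, ht⟩ := exists_pow_dvd_quadratic (p := 2) (α := 1143) (β := 1143) (γ := 286) (a := 0)
    (by norm_num) (by norm_num) n
  exact ⟨2 * t + 1, (ht.mul_left 4).trans (dvd_of_eq (by ring))⟩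

lemma not_eight_dvd_three_mul_sq_add_one (a : ℤ) : ¬ 8 ∣ 3 * a ^ 2 + 1 := by
  have h : ∀ a : ZMod 8, 3 * a ^ 2 + 1 ≠ 0 := by decide
  exact fun ha ↦ h a (by exact_mod_cast (ZMod.intCast_zmod_eq_zero_iff_dvd _ 8).2 ha)

lemma Collides.of_two_pow {M e n : ℕ} (hM : M = 1 ∨ M = 3) (hP : 1400 ≤ 2 ^ e)
    (hn : (M * 2 ^ e) ^ 2 + 9 ≤ 9 * n) : Collides (M * 2 ^ e) n := by
  obtain ⟨s, hs⟩ := exists_two_pow_dvd_mul_sq_add_one e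
  obtain ⟨x, y, hxy, hN⟩ : ∃ x y : ℤ, IsCoprime x y ∧ latticeNorm (M ^ 2) x y = 381 := by
    obtain rfl | rfl := hM
    · exact ⟨1, 18, isCoprime_one_left, by norm_num [latticeNorm]⟩
    · exact ⟨1, 2, isCoprime_one_left, by norm_num [latticeNorm]⟩
  have hM2 : M.Coprime 2 := by obtain rfl | rfl := hM <;> norm_num
  have h8 : 8 ∣ 2 ^ e := by
    refine pow_dvd_pow 2 (m := 3) (not_lt.1 fun he ↦ ?_)
    interval_cases e <;> simp at hP
  have hP' : 1400 ≤ M ^ 2 * 2 ^ e := by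
    exact hP.trans (Nat.le_mul_of_pos_left _ (by obtain rfl | rfl := hM <;> norm_num))
  refine .of_isCoprime (hM2.pow_right e) (by lia) (fun a ha ↦ ?_) hxy (s := s) ?_ (by lia) ?_ hn
  · exact not_eight_dvd_three_mul_sq_add_one a ((Int.natCast_dvd_natCast.2 h8).trans ha)
  · rw [hN]
    push_cast
    exact hs.trans (dvd_of_eq (by ring))
  · rw [hN]
    have : (1400 : ℤ) ≤ M ^ 2 * (2 ^ e : ℕ) := by exact_mod_cast hP'
    nlinarith

/-- Collisions `(m, a, b)` found by computer search, for the moduli `m = M * p ^ e` with `M ≤ 3` and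
`p ^ e < 1400` that are too small for the lattice argument, or for the one with a root of
`3 * a ^ 2 + 1`. -/
def smallCollisions : List (ℕ × ℕ × ℕ) :=
  [(4, 1, 5), (5, 3, 5), (7, 3, 8), (8, 1, 5), (10, 3, 5), (11, 1, 15), (12, 1, 10), (13, 8, 13),
   (14, 3, 10), (15, 7, 25), (16, 11, 15), (17, 8, 19), (21, 8, 17), (22, 1, 15), (23, 13, 24),
   (24, 17, 26), (25, 8, 20), (26, 2, 15), (29, 37, 57), (32, 11, 15), (33, 5, 32), (34, 21, 34),
   (39, 60, 78), (41, 15, 49), (46, 34, 41), (47, 16, 57), (48, 1, 37), (50, 8, 20), (51, 26, 44),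
   (53, 28, 102), (58, 37, 57), (59, 41, 55), (64, 51, 71), (69, 29, 74), (71, 72, 110),
   (75, 75, 93), (82, 15, 49), (83, 130, 141), (87, 7, 88), (89, 64, 81), (94, 13, 59),
   (96, 27, 63), (101, 163, 205), (106, 75, 117), (107, 39, 128), (113, 71, 112), (118, 41, 55),
   (121, 126, 153), (123, 246, 255), (125, 83, 120), (128, 102, 107), (131, 75, 136),
   (137, 96, 127), (141, 118, 208), (142, 98, 133), (149, 80, 159), (159, 139, 148),
   (166, 130, 141), (167, 119, 153), (173, 279, 286), (177, 152, 188), (178, 55, 89),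
   (179, 64, 215), (191, 135, 176), (192, 13, 121), (197, 77, 232), (202, 163, 205),
   (213, 87, 168), (214, 159, 190), (226, 179, 190), (227, 350, 391), (233, 144, 233),
   (239, 258, 509), (242, 126, 153), (249, 293, 356), (250, 158, 247), (251, 21, 344),
   (256, 13, 121), (257, 335, 499), (262, 110, 222), (263, 197, 232), (267, 272, 650),
   (269, 502, 616), (274, 155, 286), (281, 176, 279), (289, 189, 280), (293, 127, 336),
   (298, 11, 205), (303, 152, 215), (311, 71, 400), (317, 163, 344), (321, 289, 631),
   (334, 119, 153), (339, 449, 872), (346, 279, 286), (347, 435, 1025), (353, 232, 341),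
   (358, 226, 502), (359, 362, 558), (363, 126, 153), (375, 242, 278), (382, 21, 259),
   (383, 232, 387), (384, 13, 121), (389, 209, 415), (393, 509, 581), (394, 42, 418),
   (401, 249, 400), (411, 577, 847), (419, 189, 475), (431, 296, 405), (443, 728, 887),
   (447, 412, 448), (449, 448, 702), (454, 350, 391), (461, 309, 440), (466, 262, 338),
   (467, 272, 481), (478, 258, 509), (479, 522, 710), (491, 739, 863), (501, 234, 450),
   (502, 58, 530), (503, 1123, 1588), (509, 400, 431), (512, 282, 309), (514, 335, 499),
   (519, 562, 652), (521, 127, 1406), (526, 239, 595), (529, 592, 770), (537, 580, 1282),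
   (538, 277, 839), (557, 700, 738), (562, 881, 954), (563, 307, 597), (569, 449, 480),
   (573, 245, 443), (578, 15, 401), (586, 748, 940), (587, 379, 573), (591, 371, 1280),
   (593, 461, 507), (599, 344, 621), (617, 167, 777), (622, 62, 847), (625, 693, 750),
   (634, 71, 859), (641, 216, 779), (647, 798, 872), (653, 740, 942), (659, 216, 805),
   (677, 870, 878), (681, 40, 697), (683, 1066, 1750), (694, 435, 1025), (699, 476, 494),
   (701, 169, 896), (706, 34, 981), (717, 444, 831), (718, 362, 558), (719, 456, 709),
   (743, 27, 1037), (753, 116, 1115), (761, 549, 691), (766, 177, 431), (768, 13, 121),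
   (771, 487, 694), (773, 1360, 1846), (778, 209, 415), (789, 477, 729), (797, 209, 1008),
   (802, 1274, 1345), (807, 182, 866), (809, 742, 1320), (821, 571, 765), (827, 13, 1163),
   (838, 189, 475), (839, 405, 931), (841, 616, 755), (843, 472, 553), (857, 363, 989),
   (862, 71, 1182), (863, 403, 968), (867, 833, 2291), (879, 513, 1044), (881, 1008, 1262),
   (886, 1269, 1339), (887, 872, 1398), (898, 207, 1305), (911, 1150, 1202), (922, 231, 505),
   (929, 1150, 1248), (933, 1589, 1778), (934, 227, 517), (941, 344, 1125), (947, 348, 1922),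
   (951, 839, 1604), (953, 441, 1072), (958, 522, 710), (971, 664, 915), (977, 573, 1003),
   (982, 739, 863), (983, 1250, 1288), (1006, 226, 1690), (1013, 618, 1892), (1018, 271, 545),
   (1019, 825, 839), (1024, 201, 381), (1031, 565, 1091), (1041, 281, 1226), (1042, 127, 1406),
   (1049, 1703, 1723), (1058, 1160, 1356), (1059, 314, 1691), (1061, 522, 2068),
   (1077, 719, 1205), (1091, 1150, 1652), (1097, 863, 928), (1103, 677, 1107), (1109, 736, 1065),
   (1114, 889, 930), (1126, 307, 597), (1138, 115, 741), (1149, 1823, 1877), (1151, 824, 1051),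
   (1163, 853, 1043), (1167, 900, 1332), (1174, 379, 573), (1181, 861, 1064), (1186, 461, 507),
   (1187, 881, 2829), (1193, 1502, 1578), (1198, 210, 1222), (1203, 516, 1569), (1217, 853, 1128),
   (1223, 597, 1352), (1229, 629, 1336), (1234, 167, 777), (1250, 693, 750), (1257, 685, 1225),
   (1259, 2549, 2887), (1277, 1190, 2068), (1282, 1007, 1086), (1283, 978, 2252),
   (1289, 1458, 1862), (1293, 265, 1876), (1294, 855, 1246), (1301, 469, 1560),
   (1306, 1354, 1657), (1307, 783, 1328), (1318, 889, 1253), (1319, 770, 2488),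
   (1329, 3003, 3462), (1331, 995, 1176), (1347, 207, 1305), (1354, 870, 878), (1361, 376, 1709),
   (1366, 1066, 1750), (1367, 2037, 2928), (1373, 624, 1553), (1383, 1732, 2776),
   (1401, 1071, 2493), (1402, 907, 1367), (1437, 2270, 3233), (1438, 311, 825), (1473, 352, 2260),
   (1486, 27, 1037), (1509, 857, 1811), (1522, 549, 691), (1527, 1691, 1736), (1536, 282, 309),
   (1546, 2394, 2653), (1563, 572, 1526), (1587, 248, 1535), (1594, 1121, 1474),
   (1618, 1125, 1803), (1642, 571, 765), (1654, 13, 1163), (1671, 600, 1383), (1678, 405, 931),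
   (1682, 209, 1071), (1689, 1077, 1932), (1707, 488, 1505), (1714, 363, 989), (1726, 1526, 2054),
   (1761, 1121, 2390), (1762, 633, 2415), (1774, 1259, 1630), (1779, 1762, 2545),
   (1797, 996, 1482), (1822, 1150, 1202), (1851, 1366, 1483), (1858, 1057, 2263),
   (1875, 3367, 3403), (1882, 337, 2477), (1894, 2181, 2193), (1906, 1214, 1875),
   (1923, 941, 2822), (1941, 1131, 2715), (1942, 369, 1151), (1954, 573, 1003),
   (1959, 1301, 1706), (1966, 998, 1522), (1977, 888, 2760), (2026, 158, 2182), (2031, 906, 4776),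
   (2038, 825, 839), (2049, 1066, 1750), (2062, 565, 1091), (2098, 1703, 1723),
   (2103, 1719, 2538), (2122, 3047, 4461), (2157, 1272, 1353), (2182, 3358, 3426),
   (2194, 414, 2875), (2206, 677, 1107), (2218, 2783, 3959), (2229, 2631, 3864),
   (2283, 564, 2418), (2302, 671, 1185), (2319, 1360, 1846), (2326, 853, 1043), (2362, 159, 1585),
   (2374, 881, 2829), (2386, 1502, 1578), (2391, 2220, 5982), (2427, 123, 4218),
   (2434, 1105, 2754), (2446, 1455, 2494), (2458, 1182, 2731), (2463, 2352, 2388),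
   (2481, 1594, 1846), (2517, 1529, 3473), (2518, 2549, 2887), (2523, 1277, 4139),
   (2554, 2590, 3957), (2566, 1021, 3009), (2571, 1088, 1997), (2578, 1458, 1862),
   (2589, 70, 3076), (2602, 2107, 2142), (2614, 661, 1427), (2638, 2585, 3485), (2643, 633, 2415),
   (2661, 1654, 2419), (2662, 1822, 2507), (2722, 1013, 3707), (2733, 728, 2447),
   (2734, 2314, 3346), (2746, 1262, 2238), (2787, 1057, 2263), (2823, 2120, 3272),
   (2841, 1961, 3734), (2859, 814, 2956), (2913, 2139, 3723), (2931, 450, 3276),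
   (2949, 1598, 5018), (3039, 2134, 2539), (3057, 1695, 2955), (3072, 201, 381),
   (3093, 1278, 5787), (3147, 2231, 4688), (3183, 5348, 5942), (3273, 1663, 4759),
   (3291, 1752, 5622), (3309, 4274, 5642), (3327, 2486, 5150), (3453, 278, 4004),
   (3489, 1999, 4906), (3543, 2265, 3165), (3561, 1305, 5526), (3579, 2326, 3163),
   (3651, 239, 8132), (3669, 2497, 6178), (3687, 3144, 7383), (3777, 2635, 4129),
   (3831, 4264, 6865), (3849, 6034, 7825), (3867, 337, 6646), (3903, 4233, 5250),
   (3921, 1848, 5412), (3957, 2585, 3485), (3993, 4696, 6937), (4083, 421, 6982),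
   (4101, 2037, 2928), (4119, 3094, 3247)]

lemma Collides.of_mem_smallCollisions {m a b : ℕ} (h : (m, a, b) ∈ smallCollisions) :
    Collides m (9 ^ Nat.log 3 m + 1) := by
  have hvalid : ∀ t ∈ smallCollisions, 1 ≤ t.2.1 ∧ t.2.1 < t.2.2 ∧
      t.2.2 ≤ 9 ^ Nat.log 3 t.1 + 1 ∧ t.2.2 ^ 3 + t.2.2 ≡ t.2.1 ^ 3 + t.2.1 [MOD t.1 ^ 2] := by
    decide +kernel
  exact ⟨a, b, hvalid _ h⟩

set_option synthInstance.maxSize 2000 in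
lemma mul_pow_mem_smallCollisions :
    ∀ p < 1400, (∀ q ∈ [2, 3, 5, 7, 11, 13, 17, 19, 23, 29, 31, 37], q ∣ p → q = p) →
      p ≠ 3 → ∀ e < 10, 3 ≤ p ^ (e + 1) ∧ p ^ (e + 1) < 1400 ∧ (p % 3 = 2 ∨ p ^ (e + 1) < 18) →
        ∀ M < 4, ¬ p ∣ M → M * p ^ (e + 1) ∈ smallCollisions.map Prod.fst := by
  -- below `41 ^ 2`, trial division by the primes up to `37` detects primality
  decide +kernel

lemma exists_three_mul_sq_add_one_eq_zero {p : ℕ} [Fact p.Prime] (hp : p % 3 = 1) :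
    ∃ a : ZMod p, 3 * a ^ 2 + 1 = 0 := by
  have hp3 : (3 : ZMod p) ≠ 0 := three_ne_zero_of_ne (by rintro rfl; simp at hp)
  obtain ⟨ω, hω⟩ := exists_prime_orderOf_dvd_card (G := (ZMod p)ˣ) 3
    (by rw [ZMod.card_units]; exact (Nat.modEq_iff_dvd' (Fact.out : p.Prime).one_le).1 hp.symm)
  have hω3 : (ω : ZMod p) ^ 3 = 1 := by
    rw [← Units.val_pow_eq_pow_val, ← hω, pow_orderOf_eq_one, Units.val_one]
  have hω1 : (ω : ZMod p) - 1 ≠ 0 := fun h ↦ by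
    rw [show ω = 1 from Units.ext (sub_eq_zero.1 h), orderOf_one] at hω
    norm_num at hω
  have hω2 : (ω : ZMod p) ^ 2 + ω + 1 = 0 := by
    refine (mul_eq_zero.1 ?_).resolve_left hω1
    linear_combination hω3
  refine ⟨(2 * ω + 1) / 3, ?_⟩
  field_simp
  linear_combination 4 * hω2

lemma Collides.of_pow_lt {M p e : ℕ} (hp : p.Prime) (hp3 : p ≠ 3) (hpM : ¬ p ∣ M) (hM : M ≤ 3)
    (hP3 : 3 ≤ p ^ (e + 1)) (hP : p ^ (e + 1) < 1400) (hp2 : p % 3 = 2 ∨ p ^ (e + 1) < 18) :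
    Collides (M * p ^ (e + 1)) (9 ^ Nat.log 3 (M * p ^ (e + 1)) + 1) := by
  have he : 2 ^ (e + 1) < 2 ^ 11 := by
    calc 2 ^ (e + 1) ≤ p ^ (e + 1) := Nat.pow_le_pow_left hp.two_le _
      _ < 2 ^ 11 := by lia
  have he := (Nat.pow_lt_pow_iff_right (by norm_num)).1 he
  have hpP : p ≤ p ^ (e + 1) := Nat.le_self_pow e.succ_ne_zero p
  have hmem := mul_pow_mem_smallCollisions p (hpP.trans_lt hP)
    (fun q hq hqp ↦ ((Nat.dvd_prime hp).1 hqp).resolve_left (by rintro rfl; simp at hq))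
    hp3 e (by lia) ⟨hP3, hP, hp2⟩ M (by lia) hpM
  obtain ⟨⟨m, a, b⟩, ht, rfl⟩ := List.mem_map.1 hmem
  exact .of_mem_smallCollisions ht

lemma Collides.two_mul_three_pow (i : ℕ) : Collides (2 * 3 ^ i) (9 ^ i + 1) := by
  have h9 : (0 : ℤ) < 9 ^ i := by positivity
  refine .of_dvd (a := 1) (b := 9 ^ i + 1) ⟨le_rfl, ?_⟩ ⟨?_, ?_⟩ ?_ ?_
  · push_cast; lia
  · lia
  · push_cast; lia
  · lia
  · obtain ⟨t, ht⟩ : (4 : ℤ) ∣ 9 ^ i - 1 :=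
      (by norm_num : (4 : ℤ) ∣ 9 - 1).trans (sub_one_dvd_pow_sub_one 9 i)
    have hsq : ((2 * 3 ^ i : ℕ) : ℤ) ^ 2 = 9 ^ i * 4 := by
      push_cast
      rw [mul_pow, pow_right_comm]
      norm_num [mul_comm]
    rw [hsq, show (9 : ℤ) ^ i + 1 - 1 = 9 ^ i by ring]
    exact mul_dvd_mul_left _ ⟨4 * t ^ 2 + 5 * t + 2, by linear_combination (9 ^ i + 4 * t + 4) * ht⟩

lemma exists_eq_mul_prime_pow {m : ℕ} (hm : m ≠ 0) (hm1 : ∀ i, m ≠ 3 ^ i)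
    (hm2 : ∀ i, m ≠ 2 * 3 ^ i) :
    ∃ M p e : ℕ, p.Prime ∧ p ≠ 3 ∧ ¬ p ∣ M ∧ M ≠ 4 ∧ 3 ≤ p ^ (e + 1) ∧ m = M * p ^ (e + 1) := by
  have hfac {p : ℕ} (hp : p.Prime) (hpm : p ∣ m) : ∃ M e, ¬ p ∣ M ∧ m = M * p ^ (e + 1) := by
    obtain ⟨_ | e, M, hM, rfl⟩ := Nat.exists_eq_pow_mul_and_not_dvd hm p hp.ne_one
    · simp_all
    · exact ⟨M, e, hM, mul_comm _ _⟩
  by_cases h4 : 4 ∣ m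
  · obtain ⟨M, e, hM, rfl⟩ := hfac Nat.prime_two (by lia)
    obtain _ | e := e
    · lia
    · exact ⟨M, 2, e + 1, Nat.prime_two, by norm_num, hM, by lia, by
        rw [pow_succ, pow_succ]; linarith [Nat.one_le_two_pow (n := e)], rfl⟩
  · obtain ⟨i, q, hq, rfl⟩ := Nat.exists_eq_pow_mul_and_not_dvd hm 3 (by norm_num)
    have hq2 : 2 < q := by
      have := hm1 i
      have := hm2 i
      by_contra! h
      interval_cases q <;> simp_all [mul_comm]
    obtain h | ⟨p, hp, hpq, hodd⟩ := Nat.four_dvd_or_exists_odd_prime_and_dvd_of_two_lt hq2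
    · exact absurd (h.mul_left _) h4
    · obtain ⟨M, e, hM, he⟩ := hfac hp (hpq.mul_left _)
      refine ⟨M, p, e, hp, ?_, hM, ?_, ?_, he⟩
      · rintro rfl
        exact hq hpq
      · rintro rfl
        exact h4 (he ▸ dvd_mul_right _ _)
      · exact (hp.odd_iff.1 hodd).trans (Nat.le_self_pow e.succ_ne_zero p)

section Main

lemma sq_add_nine_le (m : ℕ) : m ^ 2 + 9 ≤ 9 * (9 ^ Nat.log 3 m + 1) := by
  have h : m ^ 2 ≤ (3 ^ (Nat.log 3 m + 1)) ^ 2 :=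
    Nat.pow_le_pow_left (Nat.lt_pow_succ_log_self (by norm_num) m).le 2
  rw [pow_right_comm, pow_succ] at h
  norm_num at h
  lia

variable {p M e n : ℕ} [Fact p.Prime]

lemma Collides.of_three_mul_sq_add_one_eq_zero {a : ZMod p} (hp2 : p ≠ 2)
    (ha : 3 * a ^ 2 + 1 = 0) (hM : 0 < M) (hP : 18 ≤ p ^ (e + 1))
    (hn : (M * p ^ (e + 1)) ^ 2 + 9 ≤ 9 * n) : Collides (M * p ^ (e + 1)) n := by
  obtain ⟨a, rfl⟩ := ZMod.intCast_surjective a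
  obtain ⟨b, hb⟩ := exists_pow_dvd_mul_sq_add_one (c := 3) (a := a) hp2
    ((ZMod.intCast_zmod_eq_zero_iff_dvd _ p).1 (by exact_mod_cast ha)) (e + 1)
  exact .of_dvd_three_mul_sq_add_one hM hP (by exact_mod_cast hb) hn

lemma Collides.mul_prime_pow (hp3 : p ≠ 3) (hpM : ¬ p ∣ M) (hM4 : M ≠ 4)
    (hP3 : 3 ≤ p ^ (e + 1)) :
    Collides (M * p ^ (e + 1)) (9 ^ Nat.log 3 (M * p ^ (e + 1)) + 1) := by
  have hp : p.Prime := Fact.out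
  have hn := sq_add_nine_le (M * p ^ (e + 1))
  have hM0 : 0 < M := Nat.pos_of_ne_zero (by rintro rfl; simp at hpM)
  obtain hM | hM : 5 ≤ M ∨ M ≤ 3 := by lia
  · exact .of_five_le hp3 hpM hM hP3 hn
  by_cases hsplit : p ≠ 2 ∧ 18 ≤ p ^ (e + 1) ∧ ∃ a : ZMod p, 3 * a ^ 2 + 1 = 0
  · obtain ⟨hp2, hP, a, ha⟩ := hsplit
    exact .of_three_mul_sq_add_one_eq_zero hp2 ha hM0 hP hn
  obtain hP | hP := lt_or_ge (p ^ (e + 1)) 1400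
  · refine .of_pow_lt hp hp3 hpM hM hP3 hP (or_iff_not_imp_left.2 fun hp1 ↦ ?_)
    have hp0 : p % 3 ≠ 0 := fun h ↦
      hp3 ((Nat.prime_dvd_prime_iff_eq Nat.prime_three hp).1 (Nat.dvd_of_mod_eq_zero h)).symm
    by_contra! hP18
    exact hsplit ⟨by lia, hP18, exists_three_mul_sq_add_one_eq_zero (by lia)⟩
  obtain rfl | hp2 := eq_or_ne p 2
  · exact .of_two_pow (by lia) hP hn
  · exact .of_inert hp2 hp3 (fun a ha ↦ hsplit ⟨hp2, by lia, a, ha⟩) hpM hM hP hn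

end Main

lemma Collides.of_three_pow_log_lt {m : ℕ} (hm : 3 ^ Nat.log 3 m < m) :
    Collides m (9 ^ Nat.log 3 m + 1) := by
  by_cases h2 : ∃ i, m = 2 * 3 ^ i
  · obtain ⟨i, rfl⟩ := h2
    refine (Collides.two_mul_three_pow i).mono ?_
    gcongr
    · norm_num
    · exact Nat.le_log_of_pow_le (by norm_num) (by lia)
  push Not at h2
  have h1 : ∀ i, m ≠ 3 ^ i := by
    rintro i rfl
    simp at hm
  obtain ⟨M, p, e, hp, hp3, hpM, hM4, hP, rfl⟩ := exists_eq_mul_prime_pow (by lia) h1 h2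
  have := Fact.mk hp
  exact .mul_prime_pow hp3 hpM hM4 hP

lemma three_pow_lt_sqrt {n j : ℕ} (hn : 2 ≤ n)
    (hj : j + 1 ∈ lowerBounds {j : ℕ | 1 ≤ j ∧ Real.sqrt n ≤ 3 ^ j}) :
    (3 : ℝ) ^ j < Real.sqrt n := by
  obtain rfl | hj0 := j.eq_zero_or_pos
  · rw [pow_zero, Real.lt_sqrt zero_le_one]
    exact_mod_cast hn
  · by_contra! h
    exact absurd (hj ⟨hj0, h⟩) (by lia)

/-- Let `n ≥ 2`, let `k` be the least positive integer `j` with `3^j ≥ √n`, and let `m` be a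
positive integer with `√n < m < 3^k`.  Then there exist `1 ≤ a < b ≤ n` with
`b³ + b ≡ a³ + a (mod m²)`. -/
theorem collision_exists (n : ℕ) (hn : 2 ≤ n) (k : ℕ)
    (hk : IsLeast {j : ℕ | 1 ≤ j ∧ Real.sqrt n ≤ 3 ^ j} k)
    (m : ℕ) (hm0 : 0 < m) (hm1 : Real.sqrt n < m) (hm2 : m < 3 ^ k) :
    ∃ a b : ℕ, 1 ≤ a ∧ a < b ∧ b ≤ n ∧ b ^ 3 + b ≡ a ^ 3 + a [MOD m ^ 2] := by
  obtain ⟨j, rfl⟩ := Nat.exists_eq_add_of_le' hk.1.1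
  have hj := three_pow_lt_sqrt hn hk.2
  have hjm : 3 ^ j < m := by exact_mod_cast hj.trans hm1
  have hlog : Nat.log 3 m = j := Nat.log_eq_of_pow_le_of_lt_pow hjm.le hm2
  have hjn : 9 ^ j < n := by
    rw [Real.lt_sqrt (by positivity), pow_right_comm] at hj
    norm_num at hj
    exact_mod_cast hj
  have hcoll := Collides.of_three_pow_log_lt (hlog ▸ hjm)
  rw [hlog] at hcoll
  exact hcoll.mono hjn
end

section
/- Let n ≥ 2·10^{12} and let k = min{ j ∈ ℤ⁺ : 3^j ≥ √n }. Suppose m satisfies √n < m < 3^k and m = δ·p^r, where 1 ≤ δ ≤ 3, p ≥ 5 is a prime, and r is a positive integer. Then there exist integers 1 ≤ a < b ≤ n such that b³ + b ≡ a³ + a (mod m²). -/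
/-!
Put `D = δ²` and `q = p ^ r`. For `a = D x` and `b = D y`,
`b³ + b - (a³ + a) = D (y - x) (D² (x² + x y + y²) + 1)`,
so it suffices to solve `D² (x² + x y + y²) + 1 ≡ 0 (mod q²)` with `x ≠ y` in `[1, q ⌊q / 9⌋]`.

A solution modulo `q` whose gradient is a unit multiple of `(u, v)` lifts along `(x + q s, y + q t)`
exactly when `u s + v t` lies in a prescribed class modulo `q`. If `u` and `v` are coprime, `u ≥ 10`
and both are small compared with `q`, then `u s + v t` covers all classes while `s` and `t` run
through any two intervals of length `q / 9`.

Such a direction `(u, v)` exists when `-3 (u² - u v + v²)` is a unit square modulo `p`. By counting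
squares this happens for some `(ρ, 1)`, and Thue's lemma replaces it by a proportional vector with
coprime entries of size at most `√p`. If both entries are below `10`, multiplying `u + v ω` by the
square of an element of norm `19` in the Eisenstein integers enlarges them without changing the
class of the norm modulo squares.
-/

/-- `(u, v)` is, up to a unit factor modulo `q`, the gradient of `x² + x y + y²` at a point where
this form is minus a unit square, for `q` prime to `6`. Solving `(2 x + y, x + 2 y) = c (u, v)`
for `(x, y)` turns this into the encoding used here: `-3 (u² - u v + v²)` is a unit square
modulo `q`. -/
def IsGradientDirection (q u v : ℤ) : Prop :=
  ∃ w : ℤ, IsCoprime w q ∧ q ∣ w ^ 2 + 3 * (u ^ 2 - u * v + v ^ 2)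

theorem exists_isCoprime_pow_dvd_sq_add {R : Type*} [CommRing R] {q a w : R}
    (h2 : IsCoprime 2 q) (hw : IsCoprime w q) (h : q ∣ w ^ 2 + a) (r : ℕ) :
    ∃ w' : R, IsCoprime w' q ∧ q ^ (r + 1) ∣ w' ^ 2 + a := by
  induction r with
  | zero => exact ⟨w, hw, by simpa only [zero_add, pow_one] using h⟩
  | succ r ih =>
    obtain ⟨w', hw', c, hc⟩ := ih
    obtain ⟨e, f, hef⟩ := h2.mul_left hw'
    have hcop : IsCoprime (w' + q * (-(q ^ r * e * c))) q :=
      IsCoprime.add_mul_left_left hw' _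
    refine ⟨_, hcop, f * c + q ^ r * (e * c) ^ 2, ?_⟩
    linear_combination hc - q ^ (r + 1) * c * hef

namespace IsGradientDirection

variable {q u v : ℤ}

theorem swap (h : IsGradientDirection q u v) : IsGradientDirection q v u := by
  obtain ⟨w, hw, hdvd⟩ := h
  exact ⟨w, hw, by convert hdvd using 1; ring⟩

theorem neg (h : IsGradientDirection q u v) : IsGradientDirection q (-u) (-v) := by
  obtain ⟨w, hw, hdvd⟩ := h
  exact ⟨w, hw, by convert hdvd using 1; ring⟩

theorem of_dvd_sub_mul {ρ : ℤ} (h : IsGradientDirection q ρ 1) (hv : IsCoprime v q)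
    (huv : q ∣ u - ρ * v) : IsGradientDirection q u v := by
  obtain ⟨w, hw, a, ha⟩ := h
  obtain ⟨b, hb⟩ := huv
  refine ⟨w * v, hw.mul_left hv, a * v ^ 2 + 3 * b * (u + ρ * v - v), ?_⟩
  linear_combination v ^ 2 * ha + 3 * (u + ρ * v - v) * hb

theorem of_norm_eq_sq_mul {c u' v' : ℤ} (h : IsGradientDirection q u v) (hc : IsCoprime c q)
    (hnorm : u' ^ 2 - u' * v' + v' ^ 2 = c ^ 2 * (u ^ 2 - u * v + v ^ 2)) :
    IsGradientDirection q u' v' := by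
  obtain ⟨w, hw, a, ha⟩ := h
  exact ⟨c * w, hc.mul_left hw, c ^ 2 * a, by linear_combination c ^ 2 * ha + 3 * hnorm⟩

theorem pow (h : IsGradientDirection q u v) (h2 : IsCoprime 2 q) (r : ℕ) :
    IsGradientDirection (q ^ r) u v := by
  obtain ⟨w, hw, hdvd⟩ := h
  cases r with
  | zero => exact ⟨w, by simpa only [pow_zero] using isCoprime_one_right, by simp⟩
  | succ r =>
    obtain ⟨w', hw', hdvd'⟩ := exists_isCoprime_pow_dvd_sq_add h2 hw hdvd r
    exact ⟨w', hw'.pow_right, hdvd'⟩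

end IsGradientDirection

theorem exists_dvd_mul_add_mul_sub {q u v K : ℤ} (hq : 0 < q) (hu : 0 < u) (huv : IsCoprime u v)
    (huK : u ≤ K) (hK : q + 2 * |v| * u ≤ u * K) (c s₀ t₀ : ℤ) :
    ∃ s ∈ Set.Ico s₀ (s₀ + K), ∃ t ∈ Set.Ico t₀ (t₀ + K), q ∣ u * s + v * t - c := by
  -- `u s + v t` takes every value in an interval of length `q`, even with `t` in a window of
  -- length `u`: choose `t` by its residue modulo `u` and solve for `s`.
  obtain ⟨i, hi⟩ := (existsUnique_add_zsmul_mem_Ico hq c (u * s₀ + v * t₀ + |v| * u)).exists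
  rw [smul_eq_mul, Set.mem_Ico] at hi
  obtain ⟨e, f, hef⟩ := huv
  obtain ⟨j, hj⟩ := (existsUnique_add_zsmul_mem_Ico hu (f * (c + i * q)) t₀).exists
  rw [smul_eq_mul, Set.mem_Ico] at hj
  set t := f * (c + i * q) + j * u with ht
  set s := e * (c + i * q) - j * v with hs
  have hst : u * s + v * t = c + i * q := by
    linear_combination u * hs + v * ht + (c + i * q) * hef
  have hvt : |v * (t - t₀)| ≤ |v| * u := by
    rw [abs_mul, abs_of_nonneg (sub_nonneg.2 hj.1)]
    exact mul_le_mul_of_nonneg_left (by linarith) (abs_nonneg v)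
  obtain ⟨hvt₁, hvt₂⟩ := abs_le.1 hvt
  refine ⟨s, ⟨?_, ?_⟩, t, ⟨hj.1, by linarith⟩, i, by linarith⟩
  · exact le_of_mul_le_mul_left (by linarith) hu
  · exact lt_of_mul_lt_mul_left (by linarith) hu.le

theorem exists_forall_add_mul_mem_Icc {q : ℤ} (hq : 0 < q) (a K : ℤ) :
    ∃ i : ℤ, ∀ s ∈ Set.Ico i (i + K), a + q * s ∈ Set.Icc 1 (q * K) := by
  obtain ⟨i, hi₁, hi₂⟩ := (existsUnique_add_zsmul_mem_Ico hq a 1).exists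
  rw [smul_eq_mul, mul_comm] at hi₁ hi₂
  refine ⟨i, fun s hs => ?_⟩
  have h₁ : q * i ≤ q * s := mul_le_mul_of_nonneg_left hs.1 hq.le
  have h₂ : q * (s + 1) ≤ q * (i + K) := mul_le_mul_of_nonneg_left hs.2 hq.le
  constructor <;> linarith

theorem sq_dvd_of_dvd_add_gradient {R : Type*} [CommRing R] {q D x y c s t : R}
    (hc : D ^ 2 * (x ^ 2 + x * y + y ^ 2) + 1 = q * c)
    (hst : q ∣ c + D ^ 2 * ((2 * x + y) * s + (x + 2 * y) * t)) :
    q ^ 2 ∣ D ^ 2 * ((x + q * s) ^ 2 + (x + q * s) * (y + q * t) + (y + q * t) ^ 2) + 1 := by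
  obtain ⟨d, hd⟩ := hst
  exact ⟨d + D ^ 2 * (s ^ 2 + s * t + t ^ 2), by linear_combination hc + q * hd⟩

theorem IsGradientDirection.exists_sq_dvd {q u v D K : ℤ} (h : IsGradientDirection q u v)
    (hq : 0 < q) (hu : 0 < u) (huv : IsCoprime u v) (hne : ¬ q ∣ u - v) (h3 : IsCoprime 3 q)
    (hD : IsCoprime D q) (huK : u ≤ K) (hK : q + 2 * |v| * u ≤ u * K) :
    ∃ x ∈ Set.Icc 1 (q * K), ∃ y ∈ Set.Icc 1 (q * K), x ≠ y ∧
      q ^ 2 ∣ D ^ 2 * (x ^ 2 + x * y + y ^ 2) + 1 := by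
  obtain ⟨w, hw, z, hz⟩ := h
  obtain ⟨g, e, hg⟩ := hw.mul_left hD
  have hgq : IsCoprime g q := ⟨w * D, e, by linear_combination hg⟩
  -- The gradient of `x² + x y + y²` at `(x, y)` is `3 g (u, v)`.
  set x := g * (2 * u - v) with hx
  set y := g * (2 * v - u) with hy
  obtain ⟨c, hc⟩ : q ∣ D ^ 2 * (x ^ 2 + x * y + y ^ 2) + 1 :=
    ⟨D ^ 2 * g ^ 2 * z + e * (1 + g * (w * D)), by
      linear_combination (D ^ 2 * g ^ 2) * hz - (1 + g * (w * D)) * hg⟩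
  obtain ⟨E, F, hEF⟩ : IsCoprime (D ^ 2 * (3 * g)) q := hD.pow_left.mul_left (h3.mul_left hgq)
  obtain ⟨i, hi⟩ := exists_forall_add_mul_mem_Icc hq x K
  obtain ⟨j, hj⟩ := exists_forall_add_mul_mem_Icc hq y K
  obtain ⟨s, hs, t, ht, k, hk⟩ := exists_dvd_mul_add_mul_sub hq hu huv huK hK (-(E * c)) i j
  refine ⟨x + q * s, hi s hs, y + q * t, hj t ht, fun hxy => hne ?_, ?_⟩
  · have hdvd : q ∣ 3 * g * (u - v) := ⟨t - s, by linear_combination hxy - hx + hy⟩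
    exact (h3.mul_left hgq).symm.dvd_of_dvd_mul_left hdvd
  · refine sq_dvd_of_dvd_add_gradient hc ⟨c * F + D ^ 2 * (3 * g) * k, ?_⟩
    linear_combination D ^ 2 * (3 * g) * hk - c * hEF + D ^ 2 * (2 * s + t) * hx
      + D ^ 2 * (s + 2 * t) * hy

theorem exists_sq_add_three_mul_eq_zero {F : Type*} [Field F] [Finite F] (h3 : (3 : F) ≠ 0) :
    ∃ ρ w : F, w ≠ 0 ∧ w ^ 2 + 3 * (ρ ^ 2 - ρ + 1) = 0 := by
  have := Fintype.ofFinite F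
  by_cases hsq : IsSquare (-3 : F)
  · obtain ⟨b, hb⟩ := hsq
    refine ⟨0, b, ?_, by linear_combination -hb⟩
    rintro rfl
    exact h3 (by linear_combination -hb)
  · have hchar : ringChar F ≠ 2 := fun h => hsq (FiniteField.isSquare_of_char_two h _)
    obtain ⟨w, ρ, h⟩ := FiniteField.exists_root_sum_quadratic
      (f := (Polynomial.X ^ 2 : Polynomial F))
      (g := .C 3 * .X ^ 2 + .C (-3) * .X + .C 3) (Polynomial.degree_X_pow 2)
      (Polynomial.degree_quadratic h3) (FiniteField.odd_card_of_char_ne_two hchar)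
    simp only [Polynomial.eval_add, Polynomial.eval_mul, Polynomial.eval_pow, Polynomial.eval_X,
      Polynomial.eval_C] at h
    refine ⟨ρ, w, ?_, by linear_combination h⟩
    rintro rfl
    -- A root of `ρ² - ρ + 1` gives the square root `2 ρ - 1` of `-3`.
    have hρ : ρ ^ 2 - ρ + 1 = 0 := mul_left_cancel₀ h3 (by linear_combination h)
    exact hsq ⟨2 * ρ - 1, by linear_combination -4 * hρ⟩

theorem exists_isGradientDirection_one {p : ℕ} (hp : p.Prime) (h3 : p ≠ 3) :
    ∃ ρ : ℤ, IsGradientDirection p ρ 1 := by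
  have := Fact.mk hp
  have h3p : (3 : ZMod p) ≠ 0 := by
    rw [← Nat.cast_ofNat, Ne, ZMod.natCast_eq_zero_iff,
      Nat.prime_dvd_prime_iff_eq hp Nat.prime_three]
    exact h3
  obtain ⟨ρ, w, hw, h⟩ := exists_sq_add_three_mul_eq_zero h3p
  obtain ⟨ρ, rfl⟩ := ZMod.intCast_surjective ρ
  obtain ⟨w, rfl⟩ := ZMod.intCast_surjective w
  refine ⟨ρ, w, ((ZMod.coe_int_isUnit_iff_isCoprime w p).1 hw.isUnit).symm, ?_⟩
  rw [← ZMod.intCast_zmod_eq_zero_iff_dvd]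
  push_cast
  linear_combination h

theorem exists_sq_le_dvd_sub_mul {N : ℕ} (hN : 0 < N) (ρ : ℤ) :
    ∃ u v : ℤ, 0 < v ∧ u ^ 2 ≤ N ∧ v ^ 2 ≤ N ∧ (N : ℤ) ∣ u - ρ * v := by
  set n := N.sqrt
  have hnN : (n : ℤ) ^ 2 ≤ N := by exact_mod_cast N.sqrt_le'
  have hNn : (N : ℝ) < (n + 1) ^ 2 := by exact_mod_cast N.lt_succ_sqrt'
  have hN' : (0 : ℝ) < N := by exact_mod_cast hN
  obtain ⟨j, k, hk, hkn, hjk⟩ :=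
    Real.exists_int_int_abs_mul_sub_le ((ρ : ℝ) / N) (Nat.sqrt_pos.2 hN)
  have hlt : |(ρ : ℝ) * k - j * N| < n + 1 := by
    calc |(ρ : ℝ) * k - j * N| = |k * (ρ / N : ℝ) - j| * N := by
          rw [← abs_of_pos hN', ← abs_mul, abs_of_pos hN']
          congr 1
          field_simp
      _ ≤ 1 / (n + 1) * N := by gcongr
      _ < n + 1 := by
          rw [one_div_mul_eq_div, div_lt_iff₀ (by positivity), ← sq]
          exact hNn
  have hle : |ρ * k - j * N| ≤ n := Int.lt_add_one_iff.1 (by exact_mod_cast hlt)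
  refine ⟨ρ * k - j * N, k, hk, ?_, ?_, -j, by ring⟩
  · exact (sq_le_sq' (abs_le.1 hle).1 (abs_le.1 hle).2).trans hnN
  · exact (pow_le_pow_left₀ hk.le hkn 2).trans hnN

theorem exists_isCoprime_sq_le_dvd_sub_mul {p : ℕ} (hp : p.Prime) (ρ : ℤ) :
    ∃ u v : ℤ, IsCoprime u v ∧ u ^ 2 ≤ p ∧ v ^ 2 ≤ p ∧ (p : ℤ) ∣ u - ρ * v := by
  have hpp : Prime (p : ℤ) := Nat.prime_iff_prime_int.1 hp
  obtain ⟨U, V, hV, hUp, hVp, hdvd⟩ := exists_sq_le_dvd_sub_mul hp.pos ρ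
  have hpV : ¬ (p : ℤ) ∣ V := fun h => by
    have hle := Int.le_of_dvd hV h
    have hp1 : (1 : ℤ) < p := by exact_mod_cast hp.one_lt
    nlinarith
  obtain ⟨u, v, huv, hU, hV'⟩ := Int.exists_gcd_one (Int.gcd_pos_of_ne_zero_right U hV.ne')
  set g : ℤ := (U.gcd V : ℤ)
  have hg : 1 ≤ g ^ 2 := by
    have hg0 : g ≠ 0 := fun h => hV.ne' (by rw [hV', h, mul_zero])
    exact Int.add_one_le_iff.2 (sq_pos_of_ne_zero hg0)
  refine ⟨u, v, Int.isCoprime_iff_gcd_eq_one.2 huv, ?_, ?_, ?_⟩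
  · calc u ^ 2 ≤ u ^ 2 * g ^ 2 := le_mul_of_one_le_right (sq_nonneg u) hg
      _ = U ^ 2 := by rw [hU, mul_pow]
      _ ≤ p := hUp
  · calc v ^ 2 ≤ v ^ 2 * g ^ 2 := le_mul_of_one_le_right (sq_nonneg v) hg
      _ = V ^ 2 := by rw [hV', mul_pow]
      _ ≤ p := hVp
  · have hgdvd : (p : ℤ) ∣ g * (u - ρ * v) := by
      convert hdvd using 1
      rw [hU, hV']
      ring
    exact (hpp.dvd_or_dvd hgdvd).resolve_left fun h => hpV (hV' ▸ h.mul_left v)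

theorem isCoprime_of_mul_eq_add {R : Type*} [CommRing R] {u v x y a b c d m : R}
    (huv : IsCoprime u v) (hx : IsCoprime x m) (hu : m * u = a * x + b * y)
    (hv : m * v = c * x + d * y) : IsCoprime x y := by
  obtain ⟨e, f, hef⟩ := huv
  obtain ⟨g, h, hgh⟩ := hx
  refine ⟨g + h * (e * a + f * c), h * (e * b + f * d), ?_⟩
  linear_combination hgh - h * e * hu - h * f * hv + h * m * hef

theorem exists_isCoprime_norm_eq_sq_mul {u v B : ℤ} (huv : IsCoprime u v) (hu : |u| ≤ B)
    (hv : |v| ≤ B) : ∃ x y : ℤ, IsCoprime x y ∧ |x| ≤ 37 * B ∧ |y| ≤ 37 * B ∧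
      x ^ 2 - x * y + y ^ 2 = 19 ^ 2 * (u ^ 2 - u * v + v ^ 2) := by
  have h19 : Prime (19 : ℤ) := Int.prime_ofNat_iff.2 (by norm_num)
  have coprime_sq {x : ℤ} (h : ¬ (19 : ℤ) ∣ x) : IsCoprime x (19 ^ 2) :=
    (h19.coprime_iff_not_dvd.2 h).symm.pow_right
  rw [abs_le] at hu hv
  -- Multiply `u + v ω` by `(5 + 2 ω)² = 21 + 16 ω`, or by its conjugate `5 - 16 ω`.
  by_cases h : (19 : ℤ) ∣ 21 * u - 16 * v
  · have h' : ¬ (19 : ℤ) ∣ 5 * u + 16 * v := fun h' => by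
      have hu : (19 : ℤ) ∣ u := by omega
      have hv : (19 : ℤ) ∣ v := by omega
      exact h19.not_isUnit (huv.isUnit_of_dvd' hu hv)
    refine ⟨5 * u + 16 * v, -16 * u + 21 * v, ?_, ?_, ?_, by ring⟩
    · exact isCoprime_of_mul_eq_add (a := 21) (b := -16) (c := 16) (d := 5) huv (coprime_sq h')
        (by ring) (by ring)
    · exact abs_le.2 (by constructor <;> linarith)
    · exact abs_le.2 (by constructor <;> linarith)
  · refine ⟨21 * u - 16 * v, 16 * u + 5 * v, ?_, ?_, ?_, by ring⟩
    · exact isCoprime_of_mul_eq_add (a := 5) (b := 16) (c := -16) (d := 21) huv (coprime_sq h)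
        (by ring) (by ring)
    · exact abs_le.2 (by constructor <;> linarith)
    · exact abs_le.2 (by constructor <;> linarith)

theorem lt_abs_or_lt_abs_of_lt_norm {R : Type*} [CommRing R] [LinearOrder R]
    [IsStrictOrderedRing R] {A x y : R} (h : 3 * A ^ 2 < x ^ 2 - x * y + y ^ 2) :
    A < |x| ∨ A < |y| := by
  by_contra! hxy
  have hx : x ^ 2 ≤ A ^ 2 := sq_le_sq' (abs_le.1 hxy.1).1 (abs_le.1 hxy.1).2
  have hy : y ^ 2 ≤ A ^ 2 := sq_le_sq' (abs_le.1 hxy.2).1 (abs_le.1 hxy.2).2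
  linarith [sq_nonneg (x + y)]

theorem IsGradientDirection.exists_isCoprime_lt {q u v A B : ℤ} (h : IsGradientDirection q u v)
    (huv : IsCoprime u v) (hu : |u| ≤ B) (hv : |v| ≤ B) (hA : A < |u| ∨ A < |v|) :
    ∃ x y : ℤ, IsCoprime x y ∧ A < x ∧ x ≤ B ∧ |y| ≤ B ∧ IsGradientDirection q x y := by
  wlog hAu : A < |u| generalizing u v
  · exact this h.swap huv.symm hv hu hA.symm (hA.resolve_left hAu)
  rcases abs_cases u with ⟨habs, -⟩ | ⟨habs, -⟩ <;> rw [habs] at hAu hu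
  · exact ⟨u, v, huv, hAu, hu, hv, h⟩
  · exact ⟨-u, -v, huv.neg_neg, hAu, hu, by rwa [abs_neg], h.neg⟩

theorem exists_isGradientDirection {p : ℕ} {B : ℤ} (hp : p.Prime) (h3 : p ≠ 3) (hB : 333 ≤ B)
    (hpB : p ≤ B ^ 2) :
    ∃ u v : ℤ, IsCoprime u v ∧ 9 < u ∧ u ≤ B ∧ |v| ≤ B ∧ IsGradientDirection p u v := by
  obtain ⟨ρ, hρ⟩ := exists_isGradientDirection_one hp h3
  -- The norm-`19` step fails for `p = 19`; for small `p` it is enough to shift `ρ`.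
  rcases le_or_gt p 19 with hp19 | hp19
  · obtain ⟨i, hi⟩ :=
      (existsUnique_add_zsmul_mem_Ico (Int.natCast_pos.2 hp.pos) ρ 10).exists
    rw [smul_eq_mul, Set.mem_Ico] at hi
    refine ⟨ρ + i * p, 1, isCoprime_one_right, hi.1, by omega, by rw [abs_one]; omega, ?_⟩
    exact hρ.of_dvd_sub_mul isCoprime_one_left ⟨i, by ring⟩
  obtain ⟨u, v, huv, hup, hvp, hdvd⟩ := exists_isCoprime_sq_le_dvd_sub_mul hp ρ
  have hpp : Prime (p : ℤ) := Nat.prime_iff_prime_int.1 hp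
  have hpv : ¬ (p : ℤ) ∣ v := fun h =>
    hpp.not_isUnit (huv.isUnit_of_dvd' ((dvd_iff_dvd_of_dvd_sub hdvd).2 (h.mul_left ρ)) h)
  have hdir : IsGradientDirection p u v :=
    hρ.of_dvd_sub_mul (hpp.coprime_iff_not_dvd.2 hpv).symm hdvd
  by_cases hlarge : 9 < |u| ∨ 9 < |v|
  · exact hdir.exists_isCoprime_lt huv (abs_le_of_sq_le_sq (hup.trans hpB) (by omega))
      (abs_le_of_sq_le_sq (hvp.trans hpB) (by omega)) hlarge
  push Not at hlarge
  obtain ⟨x, y, hxy, hx, hy, hnorm⟩ := exists_isCoprime_norm_eq_sq_mul huv hlarge.1 hlarge.2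
  have h19p : IsCoprime (19 : ℤ) p := by
    exact_mod_cast (Nat.coprime_primes (by norm_num) hp).2 hp19.ne
  have hnorm_pos : 1 ≤ u ^ 2 - u * v + v ^ 2 := by
    have hv2 : 0 < v ^ 2 := sq_pos_of_ne_zero fun h => hpv (h ▸ dvd_zero _)
    nlinarith [sq_nonneg (2 * u - v)]
  exact (hdir.of_norm_eq_sq_mul h19p hnorm).exists_isCoprime_lt hxy (by omega) (by omega)
    (lt_abs_or_lt_abs_of_lt_norm (by omega))

theorem exists_sq_dvd_of_prime_pow {p r : ℕ} {D : ℤ} (hp : p.Prime) (hp5 : 5 ≤ p)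
    (hD : IsCoprime D p) (hq : (10 : ℤ) ^ 5 ≤ p ^ r) :
    ∃ x ∈ Set.Icc 1 ((p : ℤ) ^ r * (p ^ r / 9)), ∃ y ∈ Set.Icc 1 ((p : ℤ) ^ r * (p ^ r / 9)),
      x ≠ y ∧ ((p : ℤ) ^ r) ^ 2 ∣ D ^ 2 * (x ^ 2 + x * y + y ^ 2) + 1 := by
  have hr : r ≠ 0 := by rintro rfl; norm_num at hq
  have hpq : (p : ℤ) ≤ p ^ r := by exact_mod_cast Nat.le_self_pow hr p
  have h2 : IsCoprime (2 : ℤ) p := by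
    exact_mod_cast (Nat.coprime_primes Nat.prime_two hp).2 (by omega)
  have h3 : IsCoprime (3 : ℤ) p := by
    exact_mod_cast (Nat.coprime_primes Nat.prime_three hp).2 (by omega)
  have hpB : (p : ℤ) ≤ (p ^ r / 200) ^ 2 := by
    have h500 : (500 : ℤ) ≤ p ^ r / 200 := by omega
    have hdiv := Int.lt_ediv_add_one_mul_self ((p : ℤ) ^ r) (show (0 : ℤ) < 200 by norm_num)
    nlinarith
  obtain ⟨u, v, huv, hu9, huB, hvB, hdir⟩ :=
    exists_isGradientDirection hp (by omega) (by omega) hpB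
  have hne : ¬ (p : ℤ) ^ r ∣ u - v := fun h => by
    obtain ⟨hv₁, hv₂⟩ := abs_le.1 hvB
    obtain rfl : u = v :=
      sub_eq_zero.1 (Int.eq_zero_of_abs_lt_dvd h (abs_lt.2 (by constructor <;> omega)))
    rw [isCoprime_self, Int.isUnit_iff] at huv
    omega
  have hwindow : (p : ℤ) ^ r + 2 * |v| * u ≤ u * (p ^ r / 9) := by
    have h10 : (p : ℤ) ^ r ≤ 10 * (p ^ r / 9 - 2 * |v|) := by omega
    nlinarith
  exact (hdir.pow h2 r).exists_sq_dvd (by omega) (by omega) huv hne h3.pow_right hD.pow_right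
    (by omega) hwindow

theorem exists_collision_of_dvd {n D Q : ℕ} {M x y : ℤ} (hD : 0 < D) (hM : D * M ≤ n)
    (hx : x ∈ Set.Icc 1 M) (hy : y ∈ Set.Icc 1 M) (hxy : x ≠ y)
    (hdvd : (Q : ℤ) ∣ (D : ℤ) ^ 2 * (x ^ 2 + x * y + y ^ 2) + 1) :
    ∃ a b : ℕ, 1 ≤ a ∧ a < b ∧ b ≤ n ∧ b ^ 3 + b ≡ a ^ 3 + a [MOD D * Q] := by
  wlog hlt : x < y generalizing x y
  · refine this hy hx hxy.symm ?_ (hxy.lt_or_gt.resolve_left hlt)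
    convert hdvd using 1
    ring
  obtain ⟨hx1, -⟩ := hx
  obtain ⟨hy1, hyM⟩ := hy
  lift x to ℕ using by omega
  lift y to ℕ using by omega
  refine ⟨D * x, D * y, ?_, ?_, ?_, ?_⟩
  · exact Nat.mul_pos hD (by exact_mod_cast hx1)
  · exact Nat.mul_lt_mul_of_pos_left (by exact_mod_cast hlt) hD
  · have hle : (D : ℤ) * y ≤ n := (mul_le_mul_of_nonneg_left hyM (by positivity)).trans hM
    exact_mod_cast hle
  · obtain ⟨c, hc⟩ := hdvd
    refine (Nat.modEq_iff_dvd.2 ⟨(y - x) * c, ?_⟩).symm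
    push_cast
    linear_combination D * (y - x) * hc

theorem collision_case_i_general {n δ p r : ℕ} (hp : p.Prime) (hp5 : 5 ≤ p) (hδ : ¬ p ∣ δ)
    (hq : 10 ^ 5 ≤ p ^ r) (hn : (δ * p ^ r) ^ 2 ≤ 9 * n) :
    ∃ a b : ℕ, 1 ≤ a ∧ a < b ∧ b ≤ n ∧ b ^ 3 + b ≡ a ^ 3 + a [MOD (δ * p ^ r) ^ 2] := by
  have hδ0 : 0 < δ := Nat.pos_of_ne_zero fun h => hδ (h ▸ dvd_zero p)
  have hδp : IsCoprime (δ : ℤ) p :=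
    Nat.isCoprime_iff_coprime.2 (hp.coprime_iff_not_dvd.2 hδ).symm
  obtain ⟨x, hx, y, hy, hxy, hdvd⟩ :=
    exists_sq_dvd_of_prime_pow hp hp5 hδp.pow_left (D := (δ : ℤ) ^ 2) (by exact_mod_cast hq)
  have hM : ((δ ^ 2 : ℕ) : ℤ) * (p ^ r * (p ^ r / 9)) ≤ n := by
    zify at hn
    push_cast
    nlinarith [Int.mul_ediv_self_le (x := (p : ℤ) ^ r) (k := 9) (by norm_num)]
  rw [mul_pow]
  exact exists_collision_of_dvd (pow_pos hδ0 2) hM hx hy hxy (by exact_mod_cast hdvd)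

theorem sq_le_nine_mul_of_isLeast {n k m : ℕ} (hn : 0 < n)
    (hk : IsLeast {j : ℕ | 1 ≤ j ∧ √(n : ℝ) ≤ 3 ^ j} k) (hm : m < 3 ^ k) : m ^ 2 ≤ 9 * n := by
  obtain ⟨⟨hk1, -⟩, hleast⟩ := hk
  obtain ⟨j, rfl⟩ := Nat.exists_eq_add_of_le' hk1
  have hj : (3 : ℝ) ^ j ≤ √n := by
    rcases Nat.eq_zero_or_pos j with rfl | hj
    · rw [pow_zero, Real.one_le_sqrt]
      exact_mod_cast hn
    · by_contra! hlt
      exact absurd (hleast ⟨hj, hlt.le⟩) (by omega)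
  have hj' : (3 ^ j) ^ 2 ≤ n := by
    exact_mod_cast (Real.le_sqrt' (by positivity)).1 hj
  calc m ^ 2 ≤ (3 ^ (j + 1)) ^ 2 := Nat.pow_le_pow_left hm.le 2
    _ = 9 * (3 ^ j) ^ 2 := by ring
    _ ≤ 9 * n := Nat.mul_le_mul_left 9 hj'

theorem lt_of_sqrt_lt_mul {n A c d q : ℕ} (hn : (c * A) ^ 2 ≤ n) (hdc : d ≤ c)
    (h : √(n : ℝ) < (d * q : ℕ)) : A < q := by
  have hlt : n < (d * q) ^ 2 := by exact_mod_cast Real.lt_sq_of_sqrt_lt h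
  by_contra! hle
  exact absurd (Nat.pow_le_pow_left (Nat.mul_le_mul hdc hle) 2) (by omega)

/-- Case (i): `n ≥ 2·10¹²`, `√n < m < 3^k`, and `m = δ·p^r` with `1 ≤ δ ≤ 3`, `p ≥ 5`
prime and `r ≥ 1`.  Then there exist `1 ≤ a < b ≤ n` with `b³ + b ≡ a³ + a (mod m²)`. -/
theorem collision_case_i (n : ℕ) (hn : 2 * 10 ^ 12 ≤ n) (k : ℕ)
    (hk : IsLeast {j : ℕ | 1 ≤ j ∧ Real.sqrt n ≤ 3 ^ j} k)
    (m δ r p : ℕ) (hp : p.Prime) (hp5 : 5 ≤ p)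
    (hδ1 : 1 ≤ δ) (hδ3 : δ ≤ 3) (hr : 1 ≤ r) (hm : m = δ * p ^ r)
    (hm1 : Real.sqrt n < m) (hm2 : m < 3 ^ k) :
    ∃ a b : ℕ, 1 ≤ a ∧ a < b ∧ b ≤ n ∧ b ^ 3 + b ≡ a ^ 3 + a [MOD m ^ 2] := by
  subst hm
  have hq : 10 ^ 5 < p ^ r := lt_of_sqrt_lt_mul (by omega) hδ3 hm1
  exact collision_case_i_general hp hp5 (Nat.not_dvd_of_pos_of_lt hδ1 (by omega)) hq.le
    (sq_le_nine_mul_of_isLeast (by omega) hk hm2)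
end
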